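/- arXiv:2408.06655 — 8 statements merged into one kernel-verified Lean document; each statement's English description precedes it below -/
import Mathlib

section
/- Discrete mass conservation of the 1D HOC-Splitting scheme (Theorem 3.1): Let γ > 0, τ > 0, and let f : ℝ → ℝ be any function. Suppose {u^n}_{n=0}^{Nt} together with intermediate stages {u^{n,1}, u^{n,2}, u^{n,3}} and source grid functions {S^n}_{n=0}^{Nt} are periodic grid functions satisfying, for each 0 ≤ n ≤ Nt−1: (i) A((u^{n,1} − u^n)/(τ/2)) = γ δ²((u^{n,1} + u^n)/2); (ii) B((u^{n,2} − u^{n,1})/τ) + D(f ∘ u^{n,1}) = B S^n; (iii) B((u^{n,3} − u^{n,1})/τ) + (1/2) D(f ∘ u^{n,1} + f ∘ u^{n,2}) = (1/2) B(S^n + S^{n+1}); (iv) A((u^{n+1} − u^{n,3})/(τ/2)) = γ δ²((u^{n+1} + u^{n,3})/2). Then for every 0 ≤ n ≤ Nt−1: (u^{n+1}, 1) = (u^0, 1) + (τ/2) Σ_{k=0}^{n} (S^k + S^{k+1}, 1). -/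
/-- Second-order central difference operator on periodic grid functions. -/
noncomputable def delta2 (N : ℕ) (h : ℝ) (v : ZMod N → ℝ) : ZMod N → ℝ :=
  fun i => (v (i + 1) - 2 * v i + v (i - 1)) / h ^ 2

/-- Central first-difference operator `(D v)ᵢ = (vᵢ₊₁ − vᵢ₋₁)/(2h)`. -/
noncomputable def Dop (N : ℕ) (h : ℝ) (v : ZMod N → ℝ) : ZMod N → ℝ :=
  fun i => (v (i + 1) - v (i - 1)) / (2 * h)

/-- Fourth-order compact operator `A = I + (h²/12) δ²`. -/
noncomputable def Aop (N : ℕ) (h : ℝ) (v : ZMod N → ℝ) : ZMod N → ℝ :=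
  fun i => v i + h ^ 2 / 12 * delta2 N h v i

/-- Fourth-order compact operator `B = I + (h²/6) δ²`. -/
noncomputable def Bop (N : ℕ) (h : ℝ) (v : ZMod N → ℝ) : ZMod N → ℝ :=
  fun i => v i + h ^ 2 / 6 * delta2 N h v i

/-- Discrete L² inner product `(v, w) = h ∑ᵢ vᵢ wᵢ`. -/
noncomputable def ip (N : ℕ) [NeZero N] (h : ℝ) (v w : ZMod N → ℝ) : ℝ :=
  h * ∑ i, v i * w i

/-!
Constants lie in the kernel of the adjoints of `D` and `δ²`: a periodic grid function and its
translates have the same sum, so `(D v, 1) = (δ² v, 1) = 0`, and hence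
`(A v, 1) = (B v, 1) = (v, 1)`. Pairing a diffusion half step with `1` therefore leaves the mass
unchanged, while pairing the corrector with `1` leaves only the source term
`τ / 2 * (Sⁿ + Sⁿ⁺¹, 1)`.
-/

/-- The mass `(v, 1)` of a periodic grid function, bundled as a linear functional so that it can be
applied to the equations of the scheme termwise. -/
noncomputable def mass (N : ℕ) [NeZero N] (h : ℝ) : (ZMod N → ℝ) →ₗ[ℝ] ℝ where
  toFun v := ip N h v (fun _ => 1)
  map_add' v w := by simp only [ip, Pi.add_apply, mul_one, Finset.sum_add_distrib, mul_add]
  map_smul' c v := by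
    simp only [ip, Pi.smul_apply, smul_eq_mul, mul_one, ← Finset.mul_sum, RingHom.id_apply]
    exact mul_left_comm h c _

section Mass

variable {N : ℕ} [NeZero N] {h : ℝ}

theorem mass_comp_add_right (v : ZMod N → ℝ) (a : ZMod N) :
    mass N h (fun i => v (i + a)) = mass N h v :=
  congrArg (h * ·) (Equiv.sum_comp (Equiv.addRight a) fun i => v i * 1)

theorem mass_delta2 (v : ZMod N → ℝ) : mass N h (delta2 N h v) = 0 := by
  have delta2_eq : delta2 N h v =
      (h ^ 2)⁻¹ • ((fun i => v (i + 1)) - (2 : ℝ) • v + fun i => v (i + -1)) := by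
    ext i
    simp [delta2, div_eq_inv_mul, sub_eq_add_neg]
  rw [delta2_eq, map_smul, map_add, map_sub, map_smul, mass_comp_add_right,
    mass_comp_add_right, smul_eq_mul, smul_eq_mul]
  ring

theorem mass_Dop (v : ZMod N → ℝ) : mass N h (Dop N h v) = 0 := by
  have Dop_eq : Dop N h v = (2 * h)⁻¹ • ((fun i => v (i + 1)) - fun i => v (i + -1)) := by
    ext i
    simp only [Dop, div_eq_inv_mul, sub_eq_add_neg, Pi.smul_apply, Pi.add_apply, Pi.neg_apply,
      smul_eq_mul]
  rw [Dop_eq, map_smul, map_sub, mass_comp_add_right, mass_comp_add_right, sub_self, smul_zero]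

theorem mass_add_smul_delta2 (c : ℝ) (v : ZMod N → ℝ) :
    mass N h (v + c • delta2 N h v) = mass N h v := by
  rw [map_add, map_smul, mass_delta2, smul_zero, add_zero]

theorem mass_Aop (v : ZMod N → ℝ) : mass N h (Aop N h v) = mass N h v :=
  mass_add_smul_delta2 (h ^ 2 / 12) v

theorem mass_Bop (v : ZMod N → ℝ) : mass N h (Bop N h v) = mass N h v :=
  mass_add_smul_delta2 (h ^ 2 / 6) v

theorem mass_sub_div (v w : ZMod N → ℝ) (τ : ℝ) :
    mass N h (fun i => (w i - v i) / τ) = (mass N h w - mass N h v) / τ := by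
  have quotient_eq : (fun i => (w i - v i) / τ) = τ⁻¹ • (w - v) :=
    funext fun i => div_eq_inv_mul (w i - v i) τ
  rw [quotient_eq, map_smul, map_sub, smul_eq_mul, div_eq_inv_mul]

theorem mass_eq_of_diffusion_step {τ γ : ℝ} (hτ : τ ≠ 0) {v w z : ZMod N → ℝ}
    (hstep : Aop N h (fun i => (w i - v i) / τ) = γ • delta2 N h z) :
    mass N h w = mass N h v := by
  have hmass := congrArg (mass N h) hstep
  rw [mass_Aop, mass_sub_div, map_smul, mass_delta2, smul_zero, div_eq_iff hτ, zero_mul] at hmass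
  exact sub_eq_zero.mp hmass

theorem mass_eq_of_transport_step {τ a b : ℝ} (hτ : τ ≠ 0) {v w F R : ZMod N → ℝ}
    (hstep : Bop N h (fun i => (w i - v i) / τ) + a • Dop N h F = b • Bop N h R) :
    mass N h w = mass N h v + τ * b * mass N h R := by
  have hmass := congrArg (mass N h) hstep
  rw [map_add, map_smul, map_smul, mass_Bop, mass_Bop, mass_Dop, mass_sub_div, smul_zero,
    add_zero, div_eq_iff hτ, smul_eq_mul] at hmass
  linear_combination hmass

end Mass

theorem hoc_splitting_mass_conservation_1d_general
    (N : ℕ) [NeZero N] (h τ γ : ℝ) (_hh : h ≠ 0) (hτ : τ ≠ 0) (Nt : ℕ)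
    (u u1 u3 F S : ℕ → ZMod N → ℝ)
    (diffusion₁ : ∀ n < Nt, ∀ i : ZMod N,
      Aop N h (fun j => (u1 n j - u n j) / (τ / 2)) i
        = γ * delta2 N h (fun j => (u1 n j + u n j) / 2) i)
    (corrector : ∀ n < Nt, ∀ i : ZMod N,
      Bop N h (fun j => (u3 n j - u1 n j) / τ) i + 1 / 2 * Dop N h (F n) i
        = 1 / 2 * Bop N h (fun j => S n j + S (n + 1) j) i)
    (diffusion₂ : ∀ n < Nt, ∀ i : ZMod N,
      Aop N h (fun j => (u (n + 1) j - u3 n j) / (τ / 2)) i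
        = γ * delta2 N h (fun j => (u (n + 1) j + u3 n j) / 2) i) :
    ∀ n ≤ Nt, mass N h (u n)
      = mass N h (u 0)
        + τ / 2 * ∑ k ∈ Finset.range n, mass N h (fun j => S k j + S (k + 1) j) := by
  have hτ2 : τ / 2 ≠ 0 := div_ne_zero hτ two_ne_zero
  have mass_succ : ∀ n < Nt, mass N h (u (n + 1))
      = mass N h (u n) + τ / 2 * mass N h (fun j => S n j + S (n + 1) j) := fun n hn =>
    calc mass N h (u (n + 1))
        = mass N h (u3 n) := mass_eq_of_diffusion_step hτ2 (funext (diffusion₂ n hn))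
      _ = mass N h (u1 n) + τ * (1 / 2) * mass N h (fun j => S n j + S (n + 1) j) :=
          mass_eq_of_transport_step hτ (funext (corrector n hn))
      _ = mass N h (u n) + τ / 2 * mass N h (fun j => S n j + S (n + 1) j) := by
          rw [mass_eq_of_diffusion_step hτ2 (funext (diffusion₁ n hn)), mul_one_div]
  intro n hn
  rw [← sub_eq_iff_eq_add', ← Finset.sum_range_sub (fun k => mass N h (u k)), Finset.mul_sum]
  refine Finset.sum_congr rfl fun k hk => sub_eq_iff_eq_add'.mpr ?_
  exact mass_succ k ((Finset.mem_range.mp hk).trans_le hn)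

/-- Discrete mass conservation of the 1D HOC-Splitting scheme (Theorem 3.1). -/
theorem hoc_splitting_mass_conservation_1d
    (N : ℕ) [NeZero N] (h τ γ : ℝ) (hh : 0 < h) (hτ : 0 < τ) (hγ : 0 < γ)
    (f : ℝ → ℝ) (Nt : ℕ)
    (u u1 u2 u3 S : ℕ → ZMod N → ℝ)
    -- (i) Crank–Nicolson diffusion half step
    (heq1 : ∀ n < Nt, ∀ i : ZMod N,
      Aop N h (fun j => (u1 n j - u n j) / (τ / 2)) i
        = γ * delta2 N h (fun j => (u1 n j + u n j) / 2) i)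
    -- (ii) SSP-RK2 predictor
    (heq2 : ∀ n < Nt, ∀ i : ZMod N,
      Bop N h (fun j => (u2 n j - u1 n j) / τ) i
          + Dop N h (fun j => f (u1 n j)) i
        = Bop N h (S n) i)
    -- (iii) SSP-RK2 corrector
    (heq3 : ∀ n < Nt, ∀ i : ZMod N,
      Bop N h (fun j => (u3 n j - u1 n j) / τ) i
          + 1 / 2 * Dop N h (fun j => f (u1 n j) + f (u2 n j)) i
        = 1 / 2 * Bop N h (fun j => S n j + S (n + 1) j) i)
    -- (iv) Crank–Nicolson diffusion half step
    (heq4 : ∀ n < Nt, ∀ i : ZMod N,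
      Aop N h (fun j => (u (n + 1) j - u3 n j) / (τ / 2)) i
        = γ * delta2 N h (fun j => (u (n + 1) j + u3 n j) / 2) i) :
    ∀ n < Nt,
      ip N h (u (n + 1)) (fun _ => 1)
        = ip N h (u 0) (fun _ => 1)
          + τ / 2 * ∑ k ∈ Finset.range (n + 1),
              ip N h (fun j => S k j + S (k + 1) j) (fun _ => 1) :=
  fun n hn => hoc_splitting_mass_conservation_1d_general N h τ γ hh.ne' hτ.ne' Nt u u1 u3
    (fun n j => f (u1 n j) + f (u2 n j)) S heq1 heq3 heq4 (n + 1) hn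
end

section
/- Discrete mass conservation of the 2D HOC-ADI-Splitting scheme (Theorem 3.2): Let γˣ, γʸ > 0, τ > 0, and f, g : ℝ → ℝ be any functions. Suppose {u^n}_{n=0}^{Nt}, intermediate stages {û^{n,1}, u^{n,1}, û^{n,2}, u^{n,2}, û^{n,3}, u^{n,3}, û^{n,4}}, and source grid functions {S^n} are 2D periodic grid functions satisfying, for each n: (i) (A_x − (γˣτ/4)δx²) û^{n,1} = (A_x + (γˣτ/4)δx²)(A_y + (γʸτ/4)δy²) u^n; (ii) (A_y − (γʸτ/4)δy²) u^{n,1} = û^{n,1}; (iii) B_x û^{n,2} = B u^{n,1} − τ B_y Dx(f ∘ u^{n,1}) − τ B_x Dy(g ∘ u^{n,1}) + τ B S^n; (iv) B_y u^{n,2} = û^{n,2}; (v) B_x û^{n,3} = B u^{n,1} − (τ/2) B_y Dx(f ∘ u^{n,1} + f ∘ u^{n,2}) − (τ/2) B_x Dy(g ∘ u^{n,1} + g ∘ u^{n,2}) + (τ/2) B(S^n + S^{n+1}); (vi) B_y u^{n,3} = û^{n,3}; (vii) (A_x − (γˣτ/4)δx²) û^{n,4} = (A_x + (γˣτ/4)δx²)(A_y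 + (γʸτ/4)δy²) u^{n,3}; (viii) (A_y − (γʸτ/4)δy²) u^{n+1} = û^{n,4}. Then for every n: (u^{n+1}, 1) = (u^0, 1) + (τ/2) Σ_{k=0}^{n} (S^k + S^{k+1}, 1). -/
/-- Second-order central difference in the `x` direction. -/
noncomputable def dx2 (Nx Ny : ℕ) (hx : ℝ) (v : ZMod Nx × ZMod Ny → ℝ) :
    ZMod Nx × ZMod Ny → ℝ :=
  fun p => (v (p.1 + 1, p.2) - 2 * v p + v (p.1 - 1, p.2)) / hx ^ 2

/-- Second-order central difference in the `y` direction. -/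
noncomputable def dy2 (Nx Ny : ℕ) (hy : ℝ) (v : ZMod Nx × ZMod Ny → ℝ) :
    ZMod Nx × ZMod Ny → ℝ :=
  fun p => (v (p.1, p.2 + 1) - 2 * v p + v (p.1, p.2 - 1)) / hy ^ 2

/-- Central first difference in the `x` direction. -/
noncomputable def Dx (Nx Ny : ℕ) (hx : ℝ) (v : ZMod Nx × ZMod Ny → ℝ) :
    ZMod Nx × ZMod Ny → ℝ :=
  fun p => (v (p.1 + 1, p.2) - v (p.1 - 1, p.2)) / (2 * hx)

/-- Central first difference in the `y` direction. -/
noncomputable def Dy (Nx Ny : ℕ) (hy : ℝ) (v : ZMod Nx × ZMod Ny → ℝ) :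
    ZMod Nx × ZMod Ny → ℝ :=
  fun p => (v (p.1, p.2 + 1) - v (p.1, p.2 - 1)) / (2 * hy)

/-- Compact operator `A_x = I + (h_x²/12) δx²`. -/
noncomputable def Ax (Nx Ny : ℕ) (hx : ℝ) (v : ZMod Nx × ZMod Ny → ℝ) :
    ZMod Nx × ZMod Ny → ℝ :=
  fun p => v p + hx ^ 2 / 12 * dx2 Nx Ny hx v p

/-- Compact operator `A_y = I + (h_y²/12) δy²`. -/
noncomputable def Ay (Nx Ny : ℕ) (hy : ℝ) (v : ZMod Nx × ZMod Ny → ℝ) :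
    ZMod Nx × ZMod Ny → ℝ :=
  fun p => v p + hy ^ 2 / 12 * dy2 Nx Ny hy v p

/-- Compact operator `B_x = I + (h_x²/6) δx²`. -/
noncomputable def Bx (Nx Ny : ℕ) (hx : ℝ) (v : ZMod Nx × ZMod Ny → ℝ) :
    ZMod Nx × ZMod Ny → ℝ :=
  fun p => v p + hx ^ 2 / 6 * dx2 Nx Ny hx v p

/-- Compact operator `B_y = I + (h_y²/6) δy²`. -/
noncomputable def By (Nx Ny : ℕ) (hy : ℝ) (v : ZMod Nx × ZMod Ny → ℝ) :
    ZMod Nx × ZMod Ny → ℝ :=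
  fun p => v p + hy ^ 2 / 6 * dy2 Nx Ny hy v p

/-- The 2D compact operator `B = B_x B_y`. -/
noncomputable def Bxy (Nx Ny : ℕ) (hx hy : ℝ) (v : ZMod Nx × ZMod Ny → ℝ) :
    ZMod Nx × ZMod Ny → ℝ :=
  Bx Nx Ny hx (By Nx Ny hy v)

/-- Discrete L² inner product `(v, w) = h_x h_y ∑_{i,j} v_{i,j} w_{i,j}`. -/
noncomputable def ip2 (Nx Ny : ℕ) [NeZero Nx] [NeZero Ny] (hx hy : ℝ)
    (v w : ZMod Nx × ZMod Ny → ℝ) : ℝ :=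
  hx * hy * ∑ p, v p * w p

/-- Discrete L² norm `‖v‖ = √(v, v)`. -/
noncomputable def nrm2 (Nx Ny : ℕ) [NeZero Nx] [NeZero Ny] (hx hy : ℝ)
    (v : ZMod Nx × ZMod Ny → ℝ) : ℝ :=
  Real.sqrt (ip2 Nx Ny hx hy v v)

/-!
Every difference operator of the scheme is a combination of differences of translates of a periodic
grid function, so its grid sum vanishes; hence the compact operators `A` and `B` preserve grid sums.
Summing the sweeps over the grid, each diffusion half step preserves the mass, while the corrector
changes it by the source term only, whatever the fluxes are. The increments then telescope in time.
-/

section PeriodicDifference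

variable {G M : Type*} [AddCommGroup G] [Fintype G] [AddCommGroup M]

theorem sum_comp_add_right (v : G → M) (e : G) : ∑ p, v (p + e) = ∑ p, v p :=
  Equiv.sum_comp (Equiv.addRight e) v

theorem sum_comp_sub_right (v : G → M) (e : G) : ∑ p, v (p - e) = ∑ p, v p :=
  Equiv.sum_comp (Equiv.subRight e) v

theorem sum_central_first_difference (v : G → M) (e : G) :
    ∑ p, (v (p + e) - v (p - e)) = 0 := by
  rw [Finset.sum_sub_distrib, sum_comp_add_right, sum_comp_sub_right, sub_self]

theorem sum_central_second_difference (v : G → M) (e : G) :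
    ∑ p, (v (p + e) - 2 • v p + v (p - e)) = 0 := by
  rw [Finset.sum_add_distrib, Finset.sum_sub_distrib, sum_comp_add_right, sum_comp_sub_right,
    ← Finset.smul_sum]
  abel

end PeriodicDifference

section GridSum

variable {Nx Ny : ℕ} [NeZero Nx] [NeZero Ny] (hx hy : ℝ) (v : ZMod Nx × ZMod Ny → ℝ)

theorem sum_Dx : ∑ p, Dx Nx Ny hx v p = 0 := by
  have h := sum_central_first_difference v (1, 0)
  simp only [Prod.add_def, Prod.sub_def, add_zero, sub_zero] at h
  simp only [Dx, ← Finset.sum_div, h, zero_div]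

theorem sum_Dy : ∑ p, Dy Nx Ny hy v p = 0 := by
  have h := sum_central_first_difference v (0, 1)
  simp only [Prod.add_def, Prod.sub_def, add_zero, sub_zero] at h
  simp only [Dy, ← Finset.sum_div, h, zero_div]

theorem sum_dx2 : ∑ p, dx2 Nx Ny hx v p = 0 := by
  have h := sum_central_second_difference v (1, 0)
  simp only [Prod.add_def, Prod.sub_def, add_zero, sub_zero, nsmul_eq_mul, Nat.cast_ofNat] at h
  simp only [dx2, ← Finset.sum_div, h, zero_div]

theorem sum_dy2 : ∑ p, dy2 Nx Ny hy v p = 0 := by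
  have h := sum_central_second_difference v (0, 1)
  simp only [Prod.add_def, Prod.sub_def, add_zero, sub_zero, nsmul_eq_mul, Nat.cast_ofNat] at h
  simp only [dy2, ← Finset.sum_div, h, zero_div]

theorem sum_Ax : ∑ p, Ax Nx Ny hx v p = ∑ p, v p := by
  simp only [Ax, Finset.sum_add_distrib, ← Finset.mul_sum, sum_dx2, mul_zero, add_zero]

theorem sum_Ay : ∑ p, Ay Nx Ny hy v p = ∑ p, v p := by
  simp only [Ay, Finset.sum_add_distrib, ← Finset.mul_sum, sum_dy2, mul_zero, add_zero]

theorem sum_Bx : ∑ p, Bx Nx Ny hx v p = ∑ p, v p := by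
  simp only [Bx, Finset.sum_add_distrib, ← Finset.mul_sum, sum_dx2, mul_zero, add_zero]

theorem sum_By : ∑ p, By Nx Ny hy v p = ∑ p, v p := by
  simp only [By, Finset.sum_add_distrib, ← Finset.mul_sum, sum_dy2, mul_zero, add_zero]

theorem sum_Bxy : ∑ p, Bxy Nx Ny hx hy v p = ∑ p, v p := by
  rw [Bxy, sum_Bx, sum_By]

theorem ip2_one_right : ip2 Nx Ny hx hy v (fun _ => 1) = hx * hy * ∑ p, v p := by
  simp only [ip2, mul_one]

end GridSum

section Substeps

variable {Nx Ny : ℕ} {hx hy : ℝ}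

/-- One ADI diffusion half step from `v` to `w`: an `x`-sweep followed by a `y`-sweep, the
intermediate stage being existentially quantified. The scheme uses the coefficients
`a = γˣτ/4` and `b = γʸτ/4`. -/
def IsDiffusionStep (hx hy a b : ℝ) (v w : ZMod Nx × ZMod Ny → ℝ) : Prop :=
  ∃ z : ZMod Nx × ZMod Ny → ℝ,
    (∀ p, Ax Nx Ny hx z p - a * dx2 Nx Ny hx z p
      = Ax Nx Ny hx (fun q => Ay Nx Ny hy v q + b * dy2 Nx Ny hy v q) p
        + a * dx2 Nx Ny hx (fun q => Ay Nx Ny hy v q + b * dy2 Nx Ny hy v q) p) ∧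
    ∀ p, Ay Nx Ny hy w p - b * dy2 Nx Ny hy w p = z p

/-- One compact convection stage from `v` to `w` of step size `s`, with flux grid functions `F`, `G`
and source `R`, the intermediate stage being existentially quantified. In the corrector `s = τ/2`,
`F` and `G` add the fluxes of the two Runge–Kutta stages, and `R` is `S^n + S^{n+1}`. -/
def IsConvectionStep (hx hy s : ℝ) (F G R v w : ZMod Nx × ZMod Ny → ℝ) : Prop :=
  ∃ z : ZMod Nx × ZMod Ny → ℝ,
    (∀ p, Bx Nx Ny hx z p
      = Bxy Nx Ny hx hy v p - s * By Nx Ny hy (Dx Nx Ny hx F) p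
        - s * Bx Nx Ny hx (Dy Nx Ny hy G) p + s * Bxy Nx Ny hx hy R p) ∧
    ∀ p, By Nx Ny hy w p = z p

variable [NeZero Nx] [NeZero Ny]

theorem IsDiffusionStep.sum_eq {a b : ℝ} {v w : ZMod Nx × ZMod Ny → ℝ}
    (h : IsDiffusionStep hx hy a b v w) : ∑ p, w p = ∑ p, v p := by
  obtain ⟨z, x_sweep, y_sweep⟩ := h
  have sum_z : ∑ p, z p = ∑ p, v p := by
    simpa only [Finset.sum_add_distrib, Finset.sum_sub_distrib, ← Finset.mul_sum, sum_Ax, sum_Ay,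
      sum_dx2, sum_dy2, mul_zero, add_zero, sub_zero] using Fintype.sum_congr _ _ x_sweep
  have sum_w : ∑ p, w p = ∑ p, z p := by
    simpa only [Finset.sum_sub_distrib, ← Finset.mul_sum, sum_Ay, sum_dy2, mul_zero, sub_zero]
      using Fintype.sum_congr _ _ y_sweep
  exact sum_w.trans sum_z

theorem IsConvectionStep.sum_eq {s : ℝ} {F G R v w : ZMod Nx × ZMod Ny → ℝ}
    (h : IsConvectionStep hx hy s F G R v w) : ∑ p, w p = ∑ p, v p + s * ∑ p, R p := by
  obtain ⟨z, x_sweep, y_sweep⟩ := h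
  have sum_z : ∑ p, z p = ∑ p, v p + s * ∑ p, R p := by
    simpa only [Finset.sum_add_distrib, Finset.sum_sub_distrib, ← Finset.mul_sum, sum_Bx, sum_By,
      sum_Bxy, sum_Dx, sum_Dy, mul_zero, sub_zero] using Fintype.sum_congr _ _ x_sweep
  have sum_w : ∑ p, w p = ∑ p, z p := by
    simpa only [sum_By] using Fintype.sum_congr _ _ y_sweep
  exact sum_w.trans sum_z

end Substeps

theorem hoc_adi_splitting_mass_conservation_2d_general
    {Nx Ny : ℕ} [NeZero Nx] [NeZero Ny] {hx hy τ γx γy : ℝ} (_hhx : hx ≠ 0) (_hhy : hy ≠ 0)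
    {Nt : ℕ} {u u1 u3 F G S : ℕ → ZMod Nx × ZMod Ny → ℝ}
    (diffusion₁ : ∀ n < Nt, IsDiffusionStep hx hy (γx * τ / 4) (γy * τ / 4) (u n) (u1 n))
    (convection : ∀ n < Nt,
      IsConvectionStep hx hy (τ / 2) (F n) (G n) (fun q => S n q + S (n + 1) q) (u1 n) (u3 n))
    (diffusion₂ : ∀ n < Nt,
      IsDiffusionStep hx hy (γx * τ / 4) (γy * τ / 4) (u3 n) (u (n + 1))) :
    ∀ n < Nt,
      ip2 Nx Ny hx hy (u (n + 1)) (fun _ => 1)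
        = ip2 Nx Ny hx hy (u 0) (fun _ => 1)
          + τ / 2 * ∑ k ∈ Finset.range (n + 1),
              ip2 Nx Ny hx hy (fun q => S k q + S (k + 1) q) (fun _ => 1) := by
  intro n hn
  have mass_increment : ∀ k < Nt,
      ip2 Nx Ny hx hy (u (k + 1)) (fun _ => 1) - ip2 Nx Ny hx hy (u k) (fun _ => 1)
        = τ / 2 * ip2 Nx Ny hx hy (fun q => S k q + S (k + 1) q) (fun _ => 1) := by
    intro k hk
    simp only [ip2_one_right]
    rw [(diffusion₂ k hk).sum_eq, (convection k hk).sum_eq, (diffusion₁ k hk).sum_eq]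
    ring
  rw [Finset.eq_sum_range_sub (fun k => ip2 Nx Ny hx hy (u k) (fun _ => 1)) (n + 1),
    Finset.mul_sum]
  congr 1
  refine Finset.sum_congr rfl fun k hk => mass_increment k ?_
  exact (Nat.lt_succ_iff.mp (Finset.mem_range.mp hk)).trans_lt hn

/-- Discrete mass conservation of the 2D HOC-ADI-Splitting scheme (Theorem 3.2). -/
theorem hoc_adi_splitting_mass_conservation_2d
    (Nx Ny : ℕ) [NeZero Nx] [NeZero Ny] (hx hy τ γx γy : ℝ)
    (hhx : 0 < hx) (hhy : 0 < hy) (hτ : 0 < τ) (hγx : 0 < γx) (hγy : 0 < γy)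
    (f g : ℝ → ℝ) (Nt : ℕ)
    (u hu1 u1 hu2 u2 hu3 u3 hu4 S : ℕ → ZMod Nx × ZMod Ny → ℝ)
    -- (i) x-sweep of the first diffusion half step
    (heq1 : ∀ n < Nt, ∀ p : ZMod Nx × ZMod Ny,
      Ax Nx Ny hx (hu1 n) p - γx * τ / 4 * dx2 Nx Ny hx (hu1 n) p
        = Ax Nx Ny hx
            (fun q => Ay Nx Ny hy (u n) q + γy * τ / 4 * dy2 Nx Ny hy (u n) q) p
          + γx * τ / 4 * dx2 Nx Ny hx
            (fun q => Ay Nx Ny hy (u n) q + γy * τ / 4 * dy2 Nx Ny hy (u n) q) p)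
    -- (ii) y-sweep of the first diffusion half step
    (heq2 : ∀ n < Nt, ∀ p : ZMod Nx × ZMod Ny,
      Ay Nx Ny hy (u1 n) p - γy * τ / 4 * dy2 Nx Ny hy (u1 n) p = hu1 n p)
    -- (iii) x-sweep of the SSP-RK2 predictor
    (heq3 : ∀ n < Nt, ∀ p : ZMod Nx × ZMod Ny,
      Bx Nx Ny hx (hu2 n) p
        = Bxy Nx Ny hx hy (u1 n) p
          - τ * By Nx Ny hy (Dx Nx Ny hx (fun q => f (u1 n q))) p
          - τ * Bx Nx Ny hx (Dy Nx Ny hy (fun q => g (u1 n q))) p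
          + τ * Bxy Nx Ny hx hy (S n) p)
    -- (iv) y-sweep of the SSP-RK2 predictor
    (heq4 : ∀ n < Nt, ∀ p : ZMod Nx × ZMod Ny,
      By Nx Ny hy (u2 n) p = hu2 n p)
    -- (v) x-sweep of the SSP-RK2 corrector
    (heq5 : ∀ n < Nt, ∀ p : ZMod Nx × ZMod Ny,
      Bx Nx Ny hx (hu3 n) p
        = Bxy Nx Ny hx hy (u1 n) p
          - τ / 2 * By Nx Ny hy (Dx Nx Ny hx (fun q => f (u1 n q) + f (u2 n q))) p
          - τ / 2 * Bx Nx Ny hx (Dy Nx Ny hy (fun q => g (u1 n q) + g (u2 n q))) p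
          + τ / 2 * Bxy Nx Ny hx hy (fun q => S n q + S (n + 1) q) p)
    -- (vi) y-sweep of the SSP-RK2 corrector
    (heq6 : ∀ n < Nt, ∀ p : ZMod Nx × ZMod Ny,
      By Nx Ny hy (u3 n) p = hu3 n p)
    -- (vii) x-sweep of the second diffusion half step
    (heq7 : ∀ n < Nt, ∀ p : ZMod Nx × ZMod Ny,
      Ax Nx Ny hx (hu4 n) p - γx * τ / 4 * dx2 Nx Ny hx (hu4 n) p
        = Ax Nx Ny hx
            (fun q => Ay Nx Ny hy (u3 n) q + γy * τ / 4 * dy2 Nx Ny hy (u3 n) q) p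
          + γx * τ / 4 * dx2 Nx Ny hx
            (fun q => Ay Nx Ny hy (u3 n) q + γy * τ / 4 * dy2 Nx Ny hy (u3 n) q) p)
    -- (viii) y-sweep of the second diffusion half step
    (heq8 : ∀ n < Nt, ∀ p : ZMod Nx × ZMod Ny,
      Ay Nx Ny hy (u (n + 1)) p - γy * τ / 4 * dy2 Nx Ny hy (u (n + 1)) p = hu4 n p) :
    ∀ n < Nt,
      ip2 Nx Ny hx hy (u (n + 1)) (fun _ => 1)
        = ip2 Nx Ny hx hy (u 0) (fun _ => 1)
          + τ / 2 * ∑ k ∈ Finset.range (n + 1),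
              ip2 Nx Ny hx hy (fun q => S k q + S (k + 1) q) (fun _ => 1) := by
  exact hoc_adi_splitting_mass_conservation_2d_general hhx.ne' hhy.ne'
    (fun n hn => ⟨hu1 n, heq1 n hn, heq2 n hn⟩) (fun n hn => ⟨hu3 n, heq5 n hn, heq6 n hn⟩)
    (fun n hn => ⟨hu4 n, heq7 n hn, heq8 n hn⟩)
end

section
/- Fourth-order compact identity with integral remainder (Lemma 5.1): Let h > 0, x ∈ ℝ, and let v : ℝ → ℝ be six times continuously differentiable on the interval [x − h, x + h]. Define ζ(λ) = 5(1 − λ)³ − 3(1 − λ)⁵. Then (v''(x + h) + 10 v''(x) + v''(x − h))/12 = (v(x + h) − 2 v(x) + v(x − h))/h² + (h⁴/360) ∫₀¹ [v⁽⁶⁾(x − λh) + v⁽⁶⁾(x + λh)] ζ(λ) dλ. -/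
/-!
Taylor's formula with integral remainder, applied at `x + h` and at `x - h` and added, has no terms
of odd degree. Up to degree five for `v` and up to degree three for `v''`, both remainders are
integrals of the same function `v⁽⁶⁾(x - λh) + v⁽⁶⁾(x + λh)`, against `(1 - λ)⁵` and `(1 - λ)³`
respectively. In the compact combination the terms in `v`, `v''` and `v⁽⁴⁾` cancel, and the two
remainders add up to the kernel `ζ`.
-/

open Finset
open scoped Nat Interval

section IteratedDerivWithin

variable {𝕜 F : Type*} [NontriviallyNormedField 𝕜] [NormedAddCommGroup F] [NormedSpace 𝕜 F]
  {f : 𝕜 → F} {s t : Set 𝕜} {x : 𝕜} {m n : ℕ}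

theorem iteratedDerivWithin_subset (hst : s ⊆ t) (hs : UniqueDiffOn 𝕜 s) (ht : UniqueDiffOn 𝕜 t)
    (hf : ContDiffOn 𝕜 n f t) (hx : x ∈ s) :
    iteratedDerivWithin n f s x = iteratedDerivWithin n f t x := by
  rw [iteratedDerivWithin, iteratedFDerivWithin_subset hst hs ht hf hx, iteratedDerivWithin]

theorem iteratedDerivWithin_iteratedDerivWithin :
    iteratedDerivWithin m (iteratedDerivWithin n f s) s = iteratedDerivWithin (m + n) f s := by
  induction m with
  | zero => rw [iteratedDerivWithin_zero, zero_add]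
  | succ m ih =>
    ext x
    rw [add_right_comm, iteratedDerivWithin_succ, iteratedDerivWithin_succ, ih]

theorem contDiffOn_iteratedDerivWithin (hs : UniqueDiffOn 𝕜 s)
    (hf : ContDiffOn 𝕜 (m + n : ℕ) f s) : ContDiffOn 𝕜 m (iteratedDerivWithin n f s) s := by
  simp only [contDiffOn_nat_iff_continuousOn_differentiableOn_deriv hs,
    iteratedDerivWithin_iteratedDerivWithin] at hf ⊢
  exact ⟨fun k hk ↦ hf.1 _ (by lia), fun k hk ↦ hf.2 _ (by lia)⟩

end IteratedDerivWithin

theorem sum_range_two_mul_pow_smul_add_neg_pow_smul {R M : Type*} [Ring R] [AddCommGroup M]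
    [Module R M] (a : ℕ → M) (c : R) (n : ℕ) :
    ∑ k ∈ range (2 * n), c ^ k • a k + ∑ k ∈ range (2 * n), (-c) ^ k • a k
      = (2 : R) • ∑ k ∈ range n, c ^ (2 * k) • a (2 * k) := by
  rw [← sum_add_distrib]
  induction n with
  | zero => simp
  | succ n ih =>
    rw [mul_add_one, sum_range_succ, sum_range_succ, sum_range_succ, ih, smul_add,
      (even_two_mul n).neg_pow, (odd_two_mul_add_one n).neg_pow, two_smul R (_ • _), neg_smul]
    abel

section SymmetricInterval

variable {α : Type*} [AddCommGroup α] [LinearOrder α] [IsOrderedAddMonoid α] (x c : α)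

theorem mem_uIcc_sub_add : x ∈ [[x - c, x + c]] := by
  simp [Set.mem_uIcc, le_total]

theorem uIcc_add_subset_uIcc_sub_add : [[x, x + c]] ⊆ [[x - c, x + c]] :=
  Set.uIcc_subset_uIcc_right (mem_uIcc_sub_add x c)

theorem uIcc_sub_subset_uIcc_sub_add : [[x, x - c]] ⊆ [[x - c, x + c]] :=
  Set.uIcc_subset_uIcc (mem_uIcc_sub_add x c) Set.left_mem_uIcc

end SymmetricInterval

section Taylor

variable {F : Type*} [NormedAddCommGroup F] [NormedSpace ℝ F] {f : ℝ → F} {s : Set ℝ} {x c : ℝ}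
  {n : ℕ}

theorem continuousOn_iteratedDerivWithin_add_mul (hs : UniqueDiffOn ℝ s) (hf : ContDiffOn ℝ n f s)
    (hxc : [[x, x + c]] ⊆ s) :
    ContinuousOn (fun l ↦ iteratedDerivWithin n f s (x + l * c)) [[0, 1]] := by
  refine (hf.continuousOn_iteratedDerivWithin le_rfl hs).comp (by fun_prop) fun l hl ↦ hxc ?_
  rw [Set.uIcc_of_le zero_le_one] at hl
  exact (convex_uIcc x (x + c)).add_smul_mem Set.left_mem_uIcc Set.right_mem_uIcc hl

theorem continuousOn_iteratedDerivWithin_sub_mul (hs : UniqueDiffOn ℝ s) (hf : ContDiffOn ℝ n f s)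
    (hxc : [[x, x - c]] ⊆ s) :
    ContinuousOn (fun l ↦ iteratedDerivWithin n f s (x - l * c)) [[0, 1]] := by
  simp only [sub_eq_add_neg, ← mul_neg] at hxc ⊢
  exact continuousOn_iteratedDerivWithin_add_mul hs hf hxc

variable [CompleteSpace F]

theorem map_add_eq_sum_add_integral_iteratedDerivWithin (hs : UniqueDiffOn ℝ s)
    (hf : ContDiffOn ℝ (n + 1 : ℕ) f s) (hxc : [[x, x + c]] ⊆ s) :
    f (x + c) = ∑ k ∈ range (n + 1), c ^ k • (k ! : ℝ)⁻¹ • iteratedDerivWithin k f s x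
      + (c ^ (n + 1) / n !) •
        ∫ l in (0 : ℝ)..1, (1 - l) ^ n • iteratedDerivWithin (n + 1) f s (x + l * c) := by
  rcases eq_or_ne c 0 with rfl | hc
  · simp [sum_range_succ']
  have hderiv : ∀ k ≤ n + 1, Set.EqOn (iteratedDerivWithin k f [[x, x + c]])
      (iteratedDerivWithin k f s) [[x, x + c]] := fun k hk y hy ↦
    iteratedDerivWithin_subset hxc (uniqueDiffOn_uIcc (by simpa using hc)) hs
      (hf.of_le (by exact_mod_cast hk)) hy
  have htaylor : taylorWithinEval f n [[x, x + c]] x (x + c)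
      = ∑ k ∈ range (n + 1), c ^ k • (k ! : ℝ)⁻¹ • iteratedDerivWithin k f s x := by
    rw [taylor_within_apply]
    refine sum_congr rfl fun k hk ↦ ?_
    rw [hderiv k (mem_range.mp hk).le Set.left_mem_uIcc, add_sub_cancel_left, mul_comm, mul_smul]
  have hremainder :
      ∫ t in x..x + c, ((x + c - t) ^ n / n !) • iteratedDerivWithin (n + 1) f [[x, x + c]] t
        = (c ^ (n + 1) / n !) •
          ∫ l in (0 : ℝ)..1, (1 - l) ^ n • iteratedDerivWithin (n + 1) f s (x + l * c) := calc
    _ = ∫ t in x..x + c, ((x + c - t) ^ n / n !) • iteratedDerivWithin (n + 1) f s t :=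
      intervalIntegral.integral_congr fun t ht ↦ congrArg _ (hderiv (n + 1) le_rfl ht)
    _ = c • ∫ l in (0 : ℝ)..1,
          ((x + c - (x + c * l)) ^ n / n !) • iteratedDerivWithin (n + 1) f s (x + c * l) := by
      rw [intervalIntegral.smul_integral_comp_add_mul
        (fun t ↦ ((x + c - t) ^ n / n !) • iteratedDerivWithin (n + 1) f s t), mul_zero, add_zero,
        mul_one]
    _ = _ := by
      simp only [← intervalIntegral.integral_smul, smul_smul, mul_comm _ c]
      congr! 3 with l
      rw [show x + c - (x + c * l) = c * (1 - l) by ring, mul_pow]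
      ring
  rw [← htaylor, ← hremainder, ← taylor_integral_remainder (hf.mono hxc), add_sub_cancel]

theorem map_add_add_map_sub_eq_sum_add_integral_iteratedDerivWithin (hs : UniqueDiffOn ℝ s)
    (hf : ContDiffOn ℝ (2 * (n + 1) : ℕ) f s) (hxc : [[x - c, x + c]] ⊆ s) :
    f (x + c) + f (x - c)
      = (2 : ℝ) • ∑ k ∈ range (n + 1),
          c ^ (2 * k) • ((2 * k)! : ℝ)⁻¹ • iteratedDerivWithin (2 * k) f s x
        + (c ^ (2 * (n + 1)) / (2 * n + 1)!) •
          ∫ l in (0 : ℝ)..1, (1 - l) ^ (2 * n + 1) •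
            (iteratedDerivWithin (2 * (n + 1)) f s (x - l * c)
              + iteratedDerivWithin (2 * (n + 1)) f s (x + l * c)) := by
  have hright := (uIcc_add_subset_uIcc_sub_add x c).trans hxc
  have hleft := (uIcc_sub_subset_uIcc_sub_add x c).trans hxc
  have hplus := map_add_eq_sum_add_integral_iteratedDerivWithin (n := 2 * n + 1) hs hf hright
  have hminus := map_add_eq_sum_add_integral_iteratedDerivWithin (n := 2 * n + 1) (c := -c) hs hf
    (by rwa [← sub_eq_add_neg])
  rw [show 2 * n + 1 + 1 = 2 * (n + 1) by ring] at hplus hminus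
  rw [(even_two_mul (n + 1)).neg_pow] at hminus
  simp only [mul_neg, ← sub_eq_add_neg] at hminus
  have hremainder : ∫ l in (0 : ℝ)..1, (1 - l) ^ (2 * n + 1) •
        (iteratedDerivWithin (2 * (n + 1)) f s (x - l * c)
          + iteratedDerivWithin (2 * (n + 1)) f s (x + l * c))
      = (∫ l in (0 : ℝ)..1, (1 - l) ^ (2 * n + 1) •
          iteratedDerivWithin (2 * (n + 1)) f s (x - l * c))
        + ∫ l in (0 : ℝ)..1, (1 - l) ^ (2 * n + 1) •
          iteratedDerivWithin (2 * (n + 1)) f s (x + l * c) := by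
    have hcont_sub := continuousOn_iteratedDerivWithin_sub_mul hs hf hleft
    have hcont_add := continuousOn_iteratedDerivWithin_add_mul hs hf hright
    simp only [smul_add]
    apply intervalIntegral.integral_add <;>
      exact ContinuousOn.intervalIntegrable (by fun_prop)
  rw [hplus, hminus, hremainder, ← sum_range_two_mul_pow_smul_add_neg_pow_smul
    (fun k ↦ (k ! : ℝ)⁻¹ • iteratedDerivWithin k f s x)]
  module

theorem compact_identity_integral_remainder_general (hs : UniqueDiffOn ℝ s)
    (hf : ContDiffOn ℝ 6 f s) (hc : c ≠ 0) (hxc : [[x - c, x + c]] ⊆ s) :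
    (12 : ℝ)⁻¹ • (iteratedDerivWithin 2 f s (x + c) + (10 : ℝ) • iteratedDerivWithin 2 f s x
        + iteratedDerivWithin 2 f s (x - c))
      = (c ^ 2)⁻¹ • (f (x + c) - (2 : ℝ) • f x + f (x - c))
        + (c ^ 4 / 360) • ∫ l in (0 : ℝ)..1, (5 * (1 - l) ^ 3 - 3 * (1 - l) ^ 5) •
            (iteratedDerivWithin 6 f s (x - l * c) + iteratedDerivWithin 6 f s (x + l * c)) := by
  set g : ℝ → F := fun l ↦
    iteratedDerivWithin 6 f s (x - l * c) + iteratedDerivWithin 6 f s (x + l * c) with hg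
  have hsum : f (x - c) = (2 : ℝ) • f x + c ^ 2 • iteratedDerivWithin 2 f s x
      + (c ^ 4 / 12) • iteratedDerivWithin 4 f s x
      + (c ^ 6 / 120) • (∫ l in (0 : ℝ)..1, (1 - l) ^ 5 • g l) - f (x + c) := by
    rw [eq_sub_iff_add_eq',
      map_add_add_map_sub_eq_sum_add_integral_iteratedDerivWithin (n := 2) hs hf hxc]
    norm_num [sum_range_succ, Nat.factorial, hg, -smul_add]
    module
  have hsum_deriv : iteratedDerivWithin 2 f s (x - c) = (2 : ℝ) • iteratedDerivWithin 2 f s x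
      + c ^ 2 • iteratedDerivWithin 4 f s x
      + (c ^ 4 / 6) • (∫ l in (0 : ℝ)..1, (1 - l) ^ 3 • g l)
      - iteratedDerivWithin 2 f s (x + c) := by
    rw [eq_sub_iff_add_eq', map_add_add_map_sub_eq_sum_add_integral_iteratedDerivWithin (n := 1) hs
      (contDiffOn_iteratedDerivWithin (m := 4) (n := 2) hs hf) hxc]
    norm_num [iteratedDerivWithin_iteratedDerivWithin, sum_range_succ, Nat.factorial, hg, -smul_add]
    module
  have hkernel : ∫ l in (0 : ℝ)..1, (5 * (1 - l) ^ 3 - 3 * (1 - l) ^ 5) • g l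
      = (5 : ℝ) • (∫ l in (0 : ℝ)..1, (1 - l) ^ 3 • g l)
        - (3 : ℝ) • ∫ l in (0 : ℝ)..1, (1 - l) ^ 5 • g l := by
    have hcont : ContinuousOn g [[0, 1]] :=
      (continuousOn_iteratedDerivWithin_sub_mul hs hf
        ((uIcc_sub_subset_uIcc_sub_add x c).trans hxc)).add
      (continuousOn_iteratedDerivWithin_add_mul hs hf
        ((uIcc_add_subset_uIcc_sub_add x c).trans hxc))
    simp only [sub_smul, mul_smul, ← intervalIntegral.integral_smul]
    apply intervalIntegral.integral_sub <;>
      exact ContinuousOn.intervalIntegrable (by fun_prop)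
  rw [hsum, hsum_deriv, hkernel]
  match_scalars <;> field_simp <;> ring

end Taylor

/-- Fourth-order compact identity with integral remainder (Lemma 5.1):
for `v ∈ C⁶[x−h, x+h]` and `ζ(λ) = 5(1−λ)³ − 3(1−λ)⁵`,
`(v''(x+h) + 10 v''(x) + v''(x−h))/12 = (v(x+h) − 2v(x) + v(x−h))/h²
  + (h⁴/360) ∫₀¹ [v⁽⁶⁾(x−λh) + v⁽⁶⁾(x+λh)] ζ(λ) dλ`. -/
theorem compact_identity_integral_remainder
    (h x : ℝ) (hh : 0 < h) (v : ℝ → ℝ)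
    (hv : ContDiffOn ℝ 6 v (Set.Icc (x - h) (x + h))) :
    (iteratedDerivWithin 2 v (Set.Icc (x - h) (x + h)) (x + h)
        + 10 * iteratedDerivWithin 2 v (Set.Icc (x - h) (x + h)) x
        + iteratedDerivWithin 2 v (Set.Icc (x - h) (x + h)) (x - h)) / 12
      = (v (x + h) - 2 * v x + v (x - h)) / h ^ 2
        + h ^ 4 / 360 *
          ∫ l in (0 : ℝ)..1,
            (iteratedDerivWithin 6 v (Set.Icc (x - h) (x + h)) (x - l * h)
              + iteratedDerivWithin 6 v (Set.Icc (x - h) (x + h)) (x + l * h))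
            * (5 * (1 - l) ^ 3 - 3 * (1 - l) ^ 5) := by
  have hlt : x - h < x + h := by linarith
  simpa only [smul_eq_mul, inv_mul_eq_div, mul_comm (5 * _ - _ : ℝ)] using
    compact_identity_integral_remainder_general (uniqueDiffOn_Icc hlt) hv hh.ne'
      (Set.uIcc_of_le hlt.le).subset
end

section
/- Norm bounds for the compact operator A (part of Lemma 5.2): For every periodic grid function v on ZMod N with mesh size h > 0, one has (2/3)‖v‖ ≤ ‖A v‖ ≤ ‖v‖, where A v = v + (h²/12) δ² v. -/
/-- Discrete L² norm `‖v‖ = √(v, v)`. -/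
noncomputable def nrm (N : ℕ) [NeZero N] (h : ℝ) (v : ZMod N → ℝ) : ℝ :=
  Real.sqrt (ip N h v v)

/-!
In terms of the shift `S`, the operator is `A = (5/6) I + (1/12) (S + S⁻¹)`. Shifts are isometries,
so by the triangle inequality `‖A v‖` differs from `(5/6) ‖v‖` by at most `(1/6) ‖v‖`.
-/

theorem abs_norm_smul_add_smul_add_sub_le {𝕜 E : Type*} [NormedField 𝕜]
    [SeminormedAddCommGroup E] [NormedSpace 𝕜 E] (a b : 𝕜) {x y z : E}
    (hy : ‖y‖ ≤ ‖x‖) (hz : ‖z‖ ≤ ‖x‖) :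
    |‖a • x + b • (y + z)‖ - ‖a‖ * ‖x‖| ≤ 2 * ‖b‖ * ‖x‖ := by
  have h_sum : ‖y + z‖ ≤ 2 * ‖x‖ := (norm_add_le y z).trans (by linarith)
  calc
    |‖a • x + b • (y + z)‖ - ‖a‖ * ‖x‖| ≤ ‖b • (y + z)‖ := by
      simpa only [norm_smul a x, add_sub_cancel_left] using
        abs_norm_sub_norm_le (a • x + b • (y + z)) (a • x)
    _ = ‖b‖ * ‖y + z‖ := norm_smul b (y + z)
    _ ≤ ‖b‖ * (2 * ‖x‖) := by gcongr
    _ = 2 * ‖b‖ * ‖x‖ := by ring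

theorem norm_toLp_comp_equiv {ι κ E : Type*} [Fintype ι] [Fintype κ] [SeminormedAddCommGroup E]
    (e : ι ≃ κ) (v : κ → E) : ‖WithLp.toLp 2 (v ∘ e)‖ = ‖WithLp.toLp 2 v‖ := by
  simp only [PiLp.norm_eq_of_L2, Function.comp_apply, e.sum_comp fun i => ‖v i‖ ^ 2]

theorem nrm_eq_sqrt_mul_norm (N : ℕ) [NeZero N] (h : ℝ) (v : ZMod N → ℝ) :
    nrm N h v = √h * ‖WithLp.toLp 2 v‖ := by
  have h_nonneg : 0 ≤ ∑ i, v i * v i := Finset.sum_nonneg fun i _ => mul_self_nonneg (v i)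
  simp only [nrm, ip, Real.sqrt_mul' h h_nonneg, EuclideanSpace.norm_eq, Real.norm_eq_abs, sq,
    abs_mul_abs_self]

theorem Aop_eq_smul_add_smul_shifts (N : ℕ) {h : ℝ} (hh : h ≠ 0) (v : ZMod N → ℝ) :
    Aop N h v = (5 / 6 : ℝ) • v +
      (1 / 12 : ℝ) • (v ∘ Equiv.addRight 1 + v ∘ Equiv.subRight 1) := by
  ext i
  simp only [Aop, delta2, Pi.add_apply, Pi.smul_apply, smul_eq_mul, Function.comp_apply,
    Equiv.coe_addRight, Equiv.subRight_apply]
  field_simp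
  ring

theorem abs_norm_Aop_sub_le (N : ℕ) [NeZero N] {h : ℝ} (hh : h ≠ 0) (v : ZMod N → ℝ) :
    |‖WithLp.toLp 2 (Aop N h v)‖ - 5 / 6 * ‖WithLp.toLp 2 v‖| ≤
      1 / 6 * ‖WithLp.toLp 2 v‖ := by
  have h_shifts := abs_norm_smul_add_smul_add_sub_le (5 / 6 : ℝ) (1 / 12 : ℝ)
    (norm_toLp_comp_equiv (Equiv.addRight (1 : ZMod N)) v).le
    (norm_toLp_comp_equiv (Equiv.subRight (1 : ZMod N)) v).le
  have h_center : ‖(5 / 6 : ℝ)‖ = 5 / 6 := by norm_num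
  have h_neighbors : 2 * ‖(1 / 12 : ℝ)‖ = 1 / 6 := by norm_num
  simpa only [Aop_eq_smul_add_smul_shifts N hh, WithLp.toLp_add, WithLp.toLp_smul, h_center,
    h_neighbors] using h_shifts

/-- Norm bounds for the compact operator `A` (part of Lemma 5.2):
`(2/3)‖v‖ ≤ ‖A v‖ ≤ ‖v‖`. -/
theorem Aop_norm_bounds
    (N : ℕ) [NeZero N] (h : ℝ) (hh : 0 < h) (v : ZMod N → ℝ) :
    2 / 3 * nrm N h v ≤ nrm N h (Aop N h v) ∧ nrm N h (Aop N h v) ≤ nrm N h v := by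
  obtain ⟨h_lower, h_upper⟩ := abs_le.mp (abs_norm_Aop_sub_le N hh.ne' v)
  simp only [nrm_eq_sqrt_mul_norm, mul_left_comm (2 / 3 : ℝ)]
  constructor
  · gcongr
    linarith
  · gcongr
    linarith
end

section
/- Quadratic-form bounds for the compact operator A (part of Lemma 5.2): For every periodic grid function v on ZMod N with mesh size h > 0, one has (2/3)‖v‖² ≤ (A v, v) ≤ ‖v‖², where A v = v + (h²/12) δ² v. In particular (A v, v) ≥ 0, A is symmetric with respect to the discrete inner product, and (v, w) ↦ (A v, w) defines an inner product on periodic grid functions. -/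
/-!
Summation by parts gives `(A v, w) = (v, w) - (h² / 12) (δ⁺ v, δ⁺ w)` for the forward difference
quotient `δ⁺`, so `A` is symmetric and `A ≤ 1`. The lower bound is the inverse inequality
`h² ‖δ⁺ v‖² ≤ 4 ‖v‖²`, whose constant accounts for `2 / 3 = 1 - 4 / 12`.
-/

open scoped fwdDiff

section FwdDiff

variable {G R : Type*} [AddCommGroup G] [Fintype G]

theorem sum_fwdDiff_mul_fwdDiff [NonAssocRing R] (g : G) (v w : G → R) :
    ∑ i, Δ_[g] v i * Δ_[g] w i = -∑ i, (v (i + g) - 2 * v i + v (i - g)) * w i := by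
  have shift_both : ∑ i, v (i + g) * w (i + g) = ∑ i, v i * w i :=
    Equiv.sum_comp (Equiv.addRight g) fun i => v i * w i
  have shift_right : ∑ i, v i * w (i + g) = ∑ i, v (i - g) * w i := by
    simpa using Equiv.sum_comp (Equiv.addRight g) fun i => v (i - g) * w i
  simp only [fwdDiff, sub_mul, mul_sub, add_mul, two_mul, Finset.sum_sub_distrib,
    Finset.sum_add_distrib, shift_both, shift_right]
  abel

theorem sum_fwdDiff_sq_le [Ring R] [LinearOrder R] [IsStrictOrderedRing R]
    (g : G) (v : G → R) : ∑ i, Δ_[g] v i ^ 2 ≤ 4 * ∑ i, v i ^ 2 :=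
  calc ∑ i, Δ_[g] v i ^ 2
      ≤ ∑ i, 2 * (v (i + g) ^ 2 + v i ^ 2) := by
        refine Finset.sum_le_sum fun i _ => ?_
        simpa [fwdDiff, sub_eq_add_neg] using add_sq_le (a := v (i + g)) (b := -v i)
    _ = 2 * (∑ i, v (i + g) ^ 2 + ∑ i, v i ^ 2) := by
        rw [← Finset.mul_sum, Finset.sum_add_distrib]
    _ = 4 * ∑ i, v i ^ 2 := by
        have shift : ∑ i, v (i + g) ^ 2 = ∑ i, v i ^ 2 :=
          Equiv.sum_comp (Equiv.addRight g) fun i => v i ^ 2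
        rw [shift, ← two_mul, ← mul_assoc]
        norm_num

end FwdDiff

/-- First-order forward difference quotient `δ⁺` on periodic grid functions, whose discrete `L²`
norm measures the defect of `Aop` from the identity. -/
noncomputable def deltaPlus (N : ℕ) (h : ℝ) (v : ZMod N → ℝ) : ZMod N → ℝ :=
  fun i => Δ_[1] v i / h

section GridFunctions

variable {N : ℕ} [NeZero N] {h : ℝ}

theorem ip_comm (v w : ZMod N → ℝ) : ip N h v w = ip N h w v := by
  simp only [ip, mul_comm]

theorem ip_self_nonneg (hh : 0 ≤ h) (v : ZMod N → ℝ) : 0 ≤ ip N h v v :=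
  mul_nonneg hh (Finset.sum_nonneg fun i _ => mul_self_nonneg (v i))

theorem ip_self_eq_zero (hh : h ≠ 0) {v : ZMod N → ℝ} : ip N h v v = 0 ↔ v = 0 :=
  (mul_eq_zero_iff_left hh).trans dotProduct_self_eq_zero

theorem nrm_sq (hh : 0 ≤ h) (v : ZMod N → ℝ) : nrm N h v ^ 2 = ip N h v v :=
  Real.sq_sqrt (ip_self_nonneg hh v)

theorem ip_deltaPlus_deltaPlus (v w : ZMod N → ℝ) :
    ip N h (deltaPlus N h v) (deltaPlus N h w) = h * ((∑ i, Δ_[1] v i * Δ_[1] w i) / h ^ 2) := by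
  simp only [ip, deltaPlus, div_mul_div_comm, ← sq, Finset.sum_div]

theorem ip_delta2_left (v w : ZMod N → ℝ) :
    ip N h (delta2 N h v) w = -ip N h (deltaPlus N h v) (deltaPlus N h w) := by
  rw [ip_deltaPlus_deltaPlus, sum_fwdDiff_mul_fwdDiff, neg_div, mul_neg, neg_neg]
  simp only [ip, delta2, div_mul_eq_mul_div, Finset.sum_div]

theorem ip_Aop_left (v w : ZMod N → ℝ) :
    ip N h (Aop N h v) w =
      ip N h v w - h ^ 2 / 12 * ip N h (deltaPlus N h v) (deltaPlus N h w) := by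
  have expand : ip N h (Aop N h v) w = ip N h v w + h ^ 2 / 12 * ip N h (delta2 N h v) w := by
    simp only [ip, Aop, add_mul, mul_assoc, Finset.sum_add_distrib, ← Finset.mul_sum]
    ring
  rw [expand, ip_delta2_left, mul_neg, ← sub_eq_add_neg]

theorem ip_Aop_comm (v w : ZMod N → ℝ) : ip N h (Aop N h v) w = ip N h v (Aop N h w) := by
  rw [ip_comm v, ip_Aop_left, ip_Aop_left, ip_comm v, ip_comm (deltaPlus N h v)]

theorem sq_mul_ip_deltaPlus_self_le (hh : 0 ≤ h) (v : ZMod N → ℝ) :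
    h ^ 2 * ip N h (deltaPlus N h v) (deltaPlus N h v) ≤ 4 * ip N h v v := by
  rcases hh.eq_or_lt with rfl | hpos
  · simp [ip]
  calc h ^ 2 * ip N h (deltaPlus N h v) (deltaPlus N h v)
      = h * ∑ i, Δ_[1] v i ^ 2 := by
        simp only [ip_deltaPlus_deltaPlus, ← sq]
        field_simp
    _ ≤ h * (4 * ∑ i, v i ^ 2) := mul_le_mul_of_nonneg_left (sum_fwdDiff_sq_le 1 v) hh
    _ = 4 * ip N h v v := by
        simp only [ip, ← sq]
        ring

theorem ip_Aop_self_le (hh : 0 ≤ h) (v : ZMod N → ℝ) : ip N h (Aop N h v) v ≤ ip N h v v := by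
  rw [ip_Aop_left]
  exact sub_le_self _ (mul_nonneg (by positivity) (ip_self_nonneg hh _))

theorem two_thirds_mul_ip_self_le_ip_Aop_self (hh : 0 ≤ h) (v : ZMod N → ℝ) :
    2 / 3 * ip N h v v ≤ ip N h (Aop N h v) v := by
  rw [ip_Aop_left]
  linarith [sq_mul_ip_deltaPlus_self_le hh v]

theorem ip_Aop_self_nonneg (hh : 0 ≤ h) (v : ZMod N → ℝ) : 0 ≤ ip N h (Aop N h v) v :=
  (mul_nonneg (by norm_num) (ip_self_nonneg hh v)).trans
    (two_thirds_mul_ip_self_le_ip_Aop_self hh v)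

theorem eq_zero_of_ip_Aop_self_eq_zero (hh : 0 < h) {v : ZMod N → ℝ}
    (hv : ip N h (Aop N h v) v = 0) : v = 0 := by
  refine (ip_self_eq_zero hh.ne').mp (le_antisymm ?_ (ip_self_nonneg hh.le v))
  linarith [two_thirds_mul_ip_self_le_ip_Aop_self hh.le v]

end GridFunctions

/-- Quadratic-form bounds for the compact operator `A` (part of Lemma 5.2):
`(2/3)‖v‖² ≤ (A v, v) ≤ ‖v‖²`; in particular `(A v, v) ≥ 0`, `A` is symmetric
for the discrete inner product, and `(v, w) ↦ (A v, w)` is an inner product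
(symmetric, nonnegative, and definite). -/
theorem Aop_quadratic_form_bounds
    (N : ℕ) [NeZero N] (h : ℝ) (hh : 0 < h) :
    (∀ v : ZMod N → ℝ,
        2 / 3 * nrm N h v ^ 2 ≤ ip N h (Aop N h v) v
          ∧ ip N h (Aop N h v) v ≤ nrm N h v ^ 2) ∧
    (∀ v : ZMod N → ℝ, 0 ≤ ip N h (Aop N h v) v) ∧
    (∀ v w : ZMod N → ℝ, ip N h (Aop N h v) w = ip N h v (Aop N h w)) ∧
    (∀ v : ZMod N → ℝ, ip N h (Aop N h v) v = 0 → v = 0) := by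
  refine ⟨fun v => ?_, ip_Aop_self_nonneg hh.le, ip_Aop_comm,
    fun v => eq_zero_of_ip_Aop_self_eq_zero hh⟩
  rw [nrm_sq hh.le]
  exact ⟨two_thirds_mul_ip_self_le_ip_Aop_self hh.le v, ip_Aop_self_le hh.le v⟩
end

section
/- Two-dimensional compact operator norm bounds (part of Lemma 5.2): For every 2D periodic grid function v on ZMod Nx × ZMod Ny with mesh sizes h_x, h_y > 0, one has (4/9)‖v‖ ≤ ‖A_x A_y v‖ ≤ ‖v‖ and (1/9)‖v‖ ≤ ‖B_x B_y v‖ ≤ ‖v‖. -/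
/-!
Translation by one mesh step permutes the grid, so it preserves the discrete `L²` norm. Since
`I + c h² δ² = (1 - 2c) I + c (T + T⁻¹)` with `T` that translation, the triangle inequality
alone gives `(1 - 4c)‖v‖ ≤ ‖(I + c h² δ²) v‖ ≤ ‖v‖` for `0 ≤ c ≤ 1/2`. The compact operators are the
cases `c = 1/12` and `c = 1/6`, applied once in each direction.
-/

section Norm

variable {E : Type*} [SeminormedAddCommGroup E] [NormedSpace ℝ E] {c : ℝ} {u x y : E}

theorem norm_one_sub_two_mul_smul_add_le (hc : 0 ≤ c) (hc' : c ≤ 1 / 2) (hx : ‖x‖ ≤ ‖u‖)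
    (hy : ‖y‖ ≤ ‖u‖) : ‖(1 - 2 * c) • u + c • (x + y)‖ ≤ ‖u‖ :=
  calc ‖(1 - 2 * c) • u + c • (x + y)‖ ≤ (1 - 2 * c) * ‖u‖ + c * ‖x + y‖ :=
        (norm_add_le _ _).trans_eq <| by
          rw [norm_smul_of_nonneg (by linarith), norm_smul_of_nonneg hc]
    _ ≤ (1 - 2 * c) * ‖u‖ + c * (‖u‖ + ‖u‖) := by gcongr; exact norm_add_le_of_le hx hy
    _ = ‖u‖ := by ring

theorem mul_norm_le_norm_one_sub_two_mul_smul_add (hc : 0 ≤ c) (hx : ‖x‖ ≤ ‖u‖) (hy : ‖y‖ ≤ ‖u‖) :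
    (1 - 4 * c) * ‖u‖ ≤ ‖(1 - 2 * c) • u + c • (x + y)‖ :=
  calc (1 - 4 * c) * ‖u‖ = (1 - 2 * c) * ‖u‖ - c * (‖u‖ + ‖u‖) := by ring
    _ ≤ |1 - 2 * c| * ‖u‖ - c * ‖x + y‖ := by
        gcongr
        exacts [le_abs_self _, norm_add_le_of_le hx hy]
    _ = ‖(1 - 2 * c) • u‖ - ‖c • (x + y)‖ := by
        rw [norm_smul, Real.norm_eq_abs, norm_smul_of_nonneg hc]
    _ ≤ ‖(1 - 2 * c) • u + c • (x + y)‖ := norm_sub_le_norm_add _ _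

end Norm

section ThreePointMean

open WithLp

variable {ι E : Type*} [SeminormedAddCommGroup E]

theorem norm_toLp_comp_perm [Fintype ι] (p : ENNReal) [Fact (1 ≤ p)] (σ : Equiv.Perm ι)
    (v : ι → E) : ‖toLp p (v ∘ σ)‖ = ‖toLp p v‖ :=
  (LinearIsometryEquiv.piLpCongrLeft p ℤ E σ.symm).norm_map (toLp p v)

variable [NormedSpace ℝ E]

/-- The operator `(1 - 2c) I + c (T + T⁻¹)`, where `T v = v ∘ σ`. When `σ` moves every grid point to
its neighbour in one direction, this is `I + c h² δ²`, with `δ²` the second central difference in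
that direction and `h` the mesh size. -/
def threePointMean (σ : Equiv.Perm ι) (c : ℝ) (v : ι → E) : ι → E :=
  (1 - 2 * c) • v + c • (v ∘ σ + v ∘ σ.symm)

variable (p : ENNReal) (σ : Equiv.Perm ι) (c : ℝ) (v : ι → E)

theorem threePointMean_apply (i : ι) :
    threePointMean σ c v i = (1 - 2 * c) • v i + c • (v (σ i) + v (σ.symm i)) :=
  rfl

theorem toLp_threePointMean :
    toLp p (threePointMean σ c v) =
      (1 - 2 * c) • toLp p v + c • (toLp p (v ∘ σ) + toLp p (v ∘ σ.symm)) := by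
  rw [threePointMean, toLp_add, toLp_smul, toLp_smul, toLp_add]

variable [Fintype ι] [Fact (1 ≤ p)] {c}

theorem norm_toLp_threePointMean_le (hc : 0 ≤ c) (hc' : c ≤ 1 / 2) :
    ‖toLp p (threePointMean σ c v)‖ ≤ ‖toLp p v‖ := by
  rw [toLp_threePointMean]
  exact norm_one_sub_two_mul_smul_add_le hc hc' (norm_toLp_comp_perm p σ v).le
    (norm_toLp_comp_perm p σ.symm v).le

theorem mul_norm_toLp_le_norm_toLp_threePointMean (hc : 0 ≤ c) :
    (1 - 4 * c) * ‖toLp p v‖ ≤ ‖toLp p (threePointMean σ c v)‖ := by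
  rw [toLp_threePointMean]
  exact mul_norm_le_norm_one_sub_two_mul_smul_add hc (norm_toLp_comp_perm p σ v).le
    (norm_toLp_comp_perm p σ.symm v).le

end ThreePointMean

section Grid

variable {Nx Ny : ℕ} {hx hy : ℝ} (v : ZMod Nx × ZMod Ny → ℝ)

theorem add_mul_dx2_eq_threePointMean (hhx : hx ≠ 0) (c : ℝ) (p : ZMod Nx × ZMod Ny) :
    v p + c * hx ^ 2 * dx2 Nx Ny hx v p = threePointMean (Equiv.addRight (1, 0)) c v p := by
  simp only [dx2, threePointMean_apply, Equiv.coe_addRight, Equiv.addRight_symm, Prod.add_def,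
    Prod.fst_neg, Prod.snd_neg, neg_zero, add_zero, sub_eq_add_neg, smul_eq_mul]
  field_simp
  ring

theorem add_mul_dy2_eq_threePointMean (hhy : hy ≠ 0) (c : ℝ) (p : ZMod Nx × ZMod Ny) :
    v p + c * hy ^ 2 * dy2 Nx Ny hy v p = threePointMean (Equiv.addRight (0, 1)) c v p := by
  simp only [dy2, threePointMean_apply, Equiv.coe_addRight, Equiv.addRight_symm, Prod.add_def,
    Prod.fst_neg, Prod.snd_neg, neg_zero, add_zero, sub_eq_add_neg, smul_eq_mul]
  field_simp
  ring

theorem Ax_eq_threePointMean (hhx : hx ≠ 0) :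
    Ax Nx Ny hx v = threePointMean (Equiv.addRight (1, 0)) (1 / 12) v := by
  ext p
  rw [Ax, ← add_mul_dx2_eq_threePointMean v hhx]
  ring

theorem Ay_eq_threePointMean (hhy : hy ≠ 0) :
    Ay Nx Ny hy v = threePointMean (Equiv.addRight (0, 1)) (1 / 12) v := by
  ext p
  rw [Ay, ← add_mul_dy2_eq_threePointMean v hhy]
  ring

theorem Bx_eq_threePointMean (hhx : hx ≠ 0) :
    Bx Nx Ny hx v = threePointMean (Equiv.addRight (1, 0)) (1 / 6) v := by
  ext p
  rw [Bx, ← add_mul_dx2_eq_threePointMean v hhx]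
  ring

theorem By_eq_threePointMean (hhy : hy ≠ 0) :
    By Nx Ny hy v = threePointMean (Equiv.addRight (0, 1)) (1 / 6) v := by
  ext p
  rw [By, ← add_mul_dy2_eq_threePointMean v hhy]
  ring

variable [NeZero Nx] [NeZero Ny] (hx hy) (σ τ : Equiv.Perm (ZMod Nx × ZMod Ny)) {c : ℝ}

theorem nrm2_eq_sqrt_mul_norm_toLp :
    nrm2 Nx Ny hx hy v = √(hx * hy) * ‖WithLp.toLp 2 v‖ := by
  have sum_nonneg : 0 ≤ ∑ p, v p * v p := Finset.sum_nonneg fun p _ => mul_self_nonneg (v p)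
  rw [nrm2, ip2, Real.sqrt_mul' _ sum_nonneg, EuclideanSpace.norm_eq]
  simp only [Real.norm_eq_abs, sq, abs_mul_abs_self]

theorem nrm2_threePointMean_le (hc : 0 ≤ c) (hc' : c ≤ 1 / 2) :
    nrm2 Nx Ny hx hy (threePointMean σ c v) ≤ nrm2 Nx Ny hx hy v := by
  simp only [nrm2_eq_sqrt_mul_norm_toLp]
  gcongr
  exact norm_toLp_threePointMean_le 2 σ v hc hc'

theorem mul_nrm2_le_nrm2_threePointMean (hc : 0 ≤ c) :
    (1 - 4 * c) * nrm2 Nx Ny hx hy v ≤ nrm2 Nx Ny hx hy (threePointMean σ c v) := by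
  simp only [nrm2_eq_sqrt_mul_norm_toLp, mul_left_comm (1 - 4 * c)]
  gcongr
  exact mul_norm_toLp_le_norm_toLp_threePointMean 2 σ v hc

variable {d : ℝ}

theorem nrm2_threePointMean_threePointMean_le (hc : 0 ≤ c) (hc' : c ≤ 1 / 2) (hd : 0 ≤ d)
    (hd' : d ≤ 1 / 2) :
    nrm2 Nx Ny hx hy (threePointMean σ c (threePointMean τ d v)) ≤ nrm2 Nx Ny hx hy v :=
  (nrm2_threePointMean_le hx hy _ σ hc hc').trans (nrm2_threePointMean_le hx hy v τ hd hd')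

theorem mul_mul_nrm2_le_nrm2_threePointMean_threePointMean (hc : 0 ≤ c) (hc' : c ≤ 1 / 4)
    (hd : 0 ≤ d) :
    (1 - 4 * c) * (1 - 4 * d) * nrm2 Nx Ny hx hy v ≤
      nrm2 Nx Ny hx hy (threePointMean σ c (threePointMean τ d v)) :=
  calc (1 - 4 * c) * (1 - 4 * d) * nrm2 Nx Ny hx hy v
      = (1 - 4 * c) * ((1 - 4 * d) * nrm2 Nx Ny hx hy v) := mul_assoc _ _ _
    _ ≤ (1 - 4 * c) * nrm2 Nx Ny hx hy (threePointMean τ d v) :=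
        mul_le_mul_of_nonneg_left (mul_nrm2_le_nrm2_threePointMean hx hy v τ hd) (by linarith)
    _ ≤ nrm2 Nx Ny hx hy (threePointMean σ c (threePointMean τ d v)) :=
        mul_nrm2_le_nrm2_threePointMean hx hy _ σ hc

end Grid

/-- Two-dimensional compact operator norm bounds (part of Lemma 5.2):
`(4/9)‖v‖ ≤ ‖A_x A_y v‖ ≤ ‖v‖` and `(1/9)‖v‖ ≤ ‖B_x B_y v‖ ≤ ‖v‖`. -/
theorem compact_operator_norm_bounds_2d
    (Nx Ny : ℕ) [NeZero Nx] [NeZero Ny] (hx hy : ℝ) (hhx : 0 < hx) (hhy : 0 < hy)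
    (v : ZMod Nx × ZMod Ny → ℝ) :
    4 / 9 * nrm2 Nx Ny hx hy v ≤ nrm2 Nx Ny hx hy (Ax Nx Ny hx (Ay Nx Ny hy v))
      ∧ nrm2 Nx Ny hx hy (Ax Nx Ny hx (Ay Nx Ny hy v)) ≤ nrm2 Nx Ny hx hy v
      ∧ 1 / 9 * nrm2 Nx Ny hx hy v ≤ nrm2 Nx Ny hx hy (Bx Nx Ny hx (By Nx Ny hy v))
      ∧ nrm2 Nx Ny hx hy (Bx Nx Ny hx (By Nx Ny hy v)) ≤ nrm2 Nx Ny hx hy v := by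
  rw [Ax_eq_threePointMean _ hhx.ne', Ay_eq_threePointMean _ hhy.ne',
    Bx_eq_threePointMean _ hhx.ne', By_eq_threePointMean _ hhy.ne',
    show (4 / 9 : ℝ) = (1 - 4 * (1 / 12)) * (1 - 4 * (1 / 12)) by norm_num,
    show (1 / 9 : ℝ) = (1 - 4 * (1 / 6)) * (1 - 4 * (1 / 6)) by norm_num]
  refine ⟨mul_mul_nrm2_le_nrm2_threePointMean_threePointMean hx hy v _ _ ?_ ?_ ?_,
    nrm2_threePointMean_threePointMean_le hx hy v _ _ ?_ ?_ ?_ ?_,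
    mul_mul_nrm2_le_nrm2_threePointMean_threePointMean hx hy v _ _ ?_ ?_ ?_,
    nrm2_threePointMean_threePointMean_le hx hy v _ _ ?_ ?_ ?_ ?_⟩ <;> norm_num
end

section
/- Stability estimate for the 2D perturbed Crank–Nicolson diffusion step (Lemma 5.4, core inequality): Let γˣ, γʸ > 0 and τ > 0, and write A = A_x A_y. Suppose e, e*, R are 2D periodic grid functions and ē = (e* + e)/2 satisfies the error equation A((e* − e)/τ) − (γˣ/2) A_y δx² ē − (γʸ/2) A_x δy² ē + (γˣγʸτ/8) A δx² δy² ē = R. Then √((A e*, e*)) ≤ √((A e, e)) + (3/2) τ ‖R‖. -/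
/-!
Up to sign, every operator of the scheme is a positive semidefinite matrix built from translations
of the periodic grid. Such matrices commute, so their products are again positive semidefinite.
Writing `S` for a unit translation, `-h² δ² = (S - 1)ᵀ (S - 1)` and
`1 + (h² / 12) δ² - 2 / 3 = (1 / 12) (S + 1)ᵀ (S + 1)`; hence `A = A_x A_y ≥ 4 / 9`, and the
implicit part `L` of the scheme satisfies `L ≥ 0`.

Testing the scheme with `u + v`, where `v` and `u` are the old and new values, gives
`‖u‖_A² - ‖v‖_A² ≤ τ (u + v, R) ≤ (3 / 2) τ (‖u‖_A + ‖v‖_A) ‖R‖`, and the factor `‖u‖_A + ‖v‖_A`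
cancels.
-/

open Matrix
open scoped MatrixOrder

section Energy

variable {ι : Type*} [Fintype ι]

lemma dotProduct_mulVec_add_sub {R : Type*} [CommRing R] {A : Matrix ι ι R} (hA : A.IsSymm)
    (u v : ι → R) : (u + v) ⬝ᵥ A *ᵥ (u - v) = u ⬝ᵥ A *ᵥ u - v ⬝ᵥ A *ᵥ v := by
  have hsymm : v ⬝ᵥ A *ᵥ u = u ⬝ᵥ A *ᵥ v := by
    rw [dotProduct_mulVec, ← mulVec_transpose, hA.eq, dotProduct_comm]
  rw [mulVec_sub, add_dotProduct, dotProduct_sub, dotProduct_sub, hsymm]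
  ring

lemma dotProduct_mulVec_nonneg_of_nonneg {A : Matrix ι ι ℝ} (hA : 0 ≤ A) (v : ι → ℝ) :
    0 ≤ v ⬝ᵥ A *ᵥ v :=
  (nonneg_iff_posSemidef.mp hA).dotProduct_mulVec_nonneg v

lemma le_add_of_sq_sub_sq_le {x y c : ℝ} (hy : 0 ≤ y) (hc : 0 ≤ c)
    (h : x ^ 2 - y ^ 2 ≤ (x + y) * c) : x ≤ y + c := by
  by_contra! hlt
  nlinarith

variable [DecidableEq ι]

lemma mul_dotProduct_self_le_of_smul_one_le {A : Matrix ι ι ℝ} {κ : ℝ}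
    (hA : κ • (1 : Matrix ι ι ℝ) ≤ A) (v : ι → ℝ) : κ * (v ⬝ᵥ v) ≤ v ⬝ᵥ A *ᵥ v := by
  have h := dotProduct_mulVec_nonneg_of_nonneg (sub_nonneg.mpr hA) v
  rwa [sub_mulVec, smul_mulVec, one_mulVec, dotProduct_sub, dotProduct_smul, smul_eq_mul,
    sub_nonneg] at h

lemma dotProduct_le_sqrt_energy_mul_sqrt {A : Matrix ι ι ℝ} {κ : ℝ} (hκ : 0 < κ)
    (hA : κ • (1 : Matrix ι ι ℝ) ≤ A) (v w : ι → ℝ) :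
    v ⬝ᵥ w ≤ √(v ⬝ᵥ A *ᵥ v) / √κ * √(w ⬝ᵥ w) := by
  have hcoercive : √(v ⬝ᵥ v) ≤ √(v ⬝ᵥ A *ᵥ v) / √κ := by
    rw [le_div_iff₀' (Real.sqrt_pos.mpr hκ), ← Real.sqrt_mul hκ.le]
    exact Real.sqrt_le_sqrt (mul_dotProduct_self_le_of_smul_one_le hA v)
  calc v ⬝ᵥ w ≤ √(v ⬝ᵥ v) * √(w ⬝ᵥ w) := by
        simpa only [dotProduct, sq] using Real.sum_mul_le_sqrt_mul_sqrt Finset.univ v w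
    _ ≤ √(v ⬝ᵥ A *ᵥ v) / √κ * √(w ⬝ᵥ w) := by gcongr

theorem crankNicolson_sqrt_energy_le {A L : Matrix ι ι ℝ} {κ τ : ℝ} (hκ : 0 < κ) (hτ : 0 < τ)
    (hA : κ • (1 : Matrix ι ι ℝ) ≤ A) (hL : ∀ w, 0 ≤ w ⬝ᵥ L *ᵥ w) {u v R : ι → ℝ}
    (hstep : A *ᵥ (τ⁻¹ • (u - v)) + L *ᵥ ((2⁻¹ : ℝ) • (u + v)) = R) :
    √(u ⬝ᵥ A *ᵥ u) ≤ √(v ⬝ᵥ A *ᵥ v) + τ / √κ * √(R ⬝ᵥ R) := by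
  have hA0 : 0 ≤ A := (smul_nonneg hκ.le zero_le_one).trans hA
  have hsymm : A.IsSymm := (nonneg_iff_posSemidef.mp hA0).isHermitian
  have henergy : u ⬝ᵥ A *ᵥ u - v ⬝ᵥ A *ᵥ v ≤ τ * (u ⬝ᵥ R + v ⬝ᵥ R) := by
    have htest : u ⬝ᵥ R + v ⬝ᵥ R
        = τ⁻¹ * (u ⬝ᵥ A *ᵥ u - v ⬝ᵥ A *ᵥ v) + 2⁻¹ * ((u + v) ⬝ᵥ L *ᵥ (u + v)) := by
      rw [← add_dotProduct, ← hstep, dotProduct_add, mulVec_smul, mulVec_smul, dotProduct_smul,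
        dotProduct_smul, dotProduct_mulVec_add_sub hsymm, smul_eq_mul, smul_eq_mul]
    rw [← inv_mul_le_iff₀ hτ, htest]
    linarith [hL (u + v)]
  refine le_add_of_sq_sub_sq_le (Real.sqrt_nonneg _) (by positivity) ?_
  calc √(u ⬝ᵥ A *ᵥ u) ^ 2 - √(v ⬝ᵥ A *ᵥ v) ^ 2
      = u ⬝ᵥ A *ᵥ u - v ⬝ᵥ A *ᵥ v := by
        rw [Real.sq_sqrt (dotProduct_mulVec_nonneg_of_nonneg hA0 u),
          Real.sq_sqrt (dotProduct_mulVec_nonneg_of_nonneg hA0 v)]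
    _ ≤ τ * (u ⬝ᵥ R + v ⬝ᵥ R) := henergy
    _ ≤ τ * (√(u ⬝ᵥ A *ᵥ u) / √κ * √(R ⬝ᵥ R) + √(v ⬝ᵥ A *ᵥ v) / √κ * √(R ⬝ᵥ R)) := by
        gcongr <;> exact dotProduct_le_sqrt_energy_mul_sqrt hκ hA _ R
    _ = (√(u ⬝ᵥ A *ᵥ u) + √(v ⬝ᵥ A *ᵥ v)) * (τ / √κ * √(R ⬝ᵥ R)) := by ring

end Energy

section Splitting

variable {ι : Type*} [Fintype ι]

/-- The implicit part of the perturbed Crank–Nicolson step, acting on the average of the old and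
new values. The matrices `Δ₁`, `Δ₂` discretize the second derivatives, with compact averaging
operators `A₁`, `A₂`; the term of order `τ` is the splitting perturbation. -/
noncomputable def perturbedSplitting (A₁ A₂ Δ₁ Δ₂ : Matrix ι ι ℝ) (γ₁ γ₂ τ : ℝ) : Matrix ι ι ℝ :=
  (γ₁ * γ₂ * τ / 8) • (A₁ * A₂ * (Δ₁ * Δ₂)) - (γ₁ / 2) • (A₂ * Δ₁) - (γ₂ / 2) • (A₁ * Δ₂)

lemma mul_smul_one_le_mul_of_commute [DecidableEq ι] {A B : Matrix ι ι ℝ} {κ μ : ℝ}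
    (hκ : 0 ≤ κ) (hμ : 0 ≤ μ) (hA : κ • (1 : Matrix ι ι ℝ) ≤ A)
    (hB : μ • (1 : Matrix ι ι ℝ) ≤ B) (hAB : Commute A B) :
    (κ * μ) • (1 : Matrix ι ι ℝ) ≤ A * B := by
  have hB0 : 0 ≤ B := (smul_nonneg hμ zero_le_one).trans hB
  have hcomm : Commute (A - κ • 1) B := hAB.sub_left ((Commute.one_left B).smul_left κ)
  have hsplit : A * B - (κ * μ) • 1 = (A - κ • 1) * B + κ • (B - μ • 1) := by
    rw [sub_mul, smul_mul_assoc, one_mul, smul_sub, smul_smul]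
    abel
  rw [← sub_nonneg, hsplit]
  exact add_nonneg (hcomm.mul_nonneg (sub_nonneg.mpr hA) hB0)
    (smul_nonneg hκ (sub_nonneg.mpr hB))

lemma perturbedSplitting_nonneg {A₁ A₂ Δ₁ Δ₂ : Matrix ι ι ℝ} {γ₁ γ₂ τ : ℝ}
    (hγ₁ : 0 ≤ γ₁) (hγ₂ : 0 ≤ γ₂) (hτ : 0 ≤ τ)
    (hA₁ : 0 ≤ A₁) (hA₂ : 0 ≤ A₂) (hΔ₁ : Δ₁ ≤ 0) (hΔ₂ : Δ₂ ≤ 0)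
    (hAA : Commute A₁ A₂) (hΔΔ : Commute Δ₁ Δ₂) (hA₁Δ₁ : Commute A₁ Δ₁) (hA₁Δ₂ : Commute A₁ Δ₂)
    (hA₂Δ₁ : Commute A₂ Δ₁) (hA₂Δ₂ : Commute A₂ Δ₂) :
    0 ≤ perturbedSplitting A₁ A₂ Δ₁ Δ₂ γ₁ γ₂ τ := by
  classical
  have hnegΔ₁ : 0 ≤ -Δ₁ := neg_nonneg.mpr hΔ₁
  have hnegΔ₂ : 0 ≤ -Δ₂ := neg_nonneg.mpr hΔ₂
  have hAΔ₁ : 0 ≤ A₂ * -Δ₁ := hA₂Δ₁.neg_right.mul_nonneg hA₂ hnegΔ₁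
  have hAΔ₂ : 0 ≤ A₁ * -Δ₂ := hA₁Δ₂.neg_right.mul_nonneg hA₁ hnegΔ₂
  have hΔ : 0 ≤ Δ₁ * Δ₂ := by
    simpa only [neg_mul_neg] using hΔΔ.neg_left.neg_right.mul_nonneg hnegΔ₁ hnegΔ₂
  have hperturb : 0 ≤ A₁ * A₂ * (Δ₁ * Δ₂) :=
    ((hA₁Δ₁.mul_right hA₁Δ₂).mul_left (hA₂Δ₁.mul_right hA₂Δ₂)).mul_nonneg
      (hAA.mul_nonneg hA₁ hA₂) hΔ
  have hsplit : perturbedSplitting A₁ A₂ Δ₁ Δ₂ γ₁ γ₂ τ = (γ₁ * γ₂ * τ / 8) • (A₁ * A₂ * (Δ₁ * Δ₂))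
      + (γ₁ / 2) • (A₂ * -Δ₁) + (γ₂ / 2) • (A₁ * -Δ₂) := by
    simp only [perturbedSplitting, mul_neg, smul_neg, sub_eq_add_neg]
  rw [hsplit]
  exact add_nonneg (add_nonneg (smul_nonneg (by positivity) hperturb)
    (smul_nonneg (by positivity) hAΔ₁)) (smul_nonneg (by positivity) hAΔ₂)

end Splitting

section Translation

variable {G : Type*} [AddCommGroup G] [DecidableEq G]

/-- The matrix of the translation `v ↦ v (· + a)`. -/
def shiftMatrix (a : G) : Matrix G G ℝ :=
  (Equiv.addRight a).permMatrix ℝ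

/-- The matrix of the central second difference with step `a` and mesh size `h`. -/
noncomputable def secondDifference (a : G) (h : ℝ) : Matrix G G ℝ :=
  (h ^ 2)⁻¹ • (shiftMatrix a - (2 : ℝ) • 1 + shiftMatrix (-a))

/-- The matrix of the fourth-order compact averaging operator `1 + (h² / 12) δ²` with step `a`. -/
noncomputable def compactAverage (a : G) (h : ℝ) : Matrix G G ℝ :=
  1 + (h ^ 2 / 12) • secondDifference a h

lemma conjTranspose_shiftMatrix (a : G) : (shiftMatrix a)ᴴ = shiftMatrix (-a) := by
  rw [shiftMatrix, conjTranspose_permMatrix, Equiv.neg_addRight, shiftMatrix]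

section Fintype

variable [Fintype G]

lemma shiftMatrix_mulVec_apply (a : G) (v : G → ℝ) (p : G) :
    (shiftMatrix a *ᵥ v) p = v (p + a) := by
  rw [shiftMatrix, permMatrix_mulVec]
  rfl

lemma shiftMatrix_mul (a b : G) : shiftMatrix a * shiftMatrix b = shiftMatrix (a + b) := by
  rw [shiftMatrix, shiftMatrix, shiftMatrix, ← permMatrix_mul, Equiv.addRight_add]

lemma shiftMatrix_commute (a b : G) : Commute (shiftMatrix a) (shiftMatrix b) := by
  rw [Commute, SemiconjBy, shiftMatrix_mul, shiftMatrix_mul, add_comm]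

lemma shiftMatrix_neg_mul_self (a : G) : shiftMatrix (-a) * shiftMatrix a = 1 := by
  rw [shiftMatrix_mul, neg_add_cancel, shiftMatrix, Equiv.addRight_zero, permMatrix_one]

lemma secondDifference_mulVec_apply (a : G) (h : ℝ) (v : G → ℝ) (p : G) :
    (secondDifference a h *ᵥ v) p = (v (p + a) - 2 * v p + v (p - a)) / h ^ 2 := by
  simp only [secondDifference, smul_mulVec, add_mulVec, sub_mulVec, one_mulVec, Pi.smul_apply,
    Pi.add_apply, Pi.sub_apply, shiftMatrix_mulVec_apply, smul_eq_mul, ← sub_eq_add_neg]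
  ring

lemma compactAverage_mulVec_apply (a : G) (h : ℝ) (v : G → ℝ) (p : G) :
    (compactAverage a h *ᵥ v) p = v p + h ^ 2 / 12 * (secondDifference a h *ᵥ v) p := by
  rw [compactAverage, add_mulVec, one_mulVec, smul_mulVec, Pi.add_apply, Pi.smul_apply, smul_eq_mul]

lemma commute_secondDifference_of_commute_shiftMatrix {M : Matrix G G ℝ}
    (hM : ∀ c, Commute M (shiftMatrix c)) (a : G) (h : ℝ) : Commute M (secondDifference a h) :=
  (((hM a).sub_right ((Commute.one_right M).smul_right 2)).add_right (hM (-a))).smul_right _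

lemma secondDifference_commute (a b : G) (h k : ℝ) :
    Commute (secondDifference a h) (secondDifference b k) :=
  commute_secondDifference_of_commute_shiftMatrix
    (fun c ↦ (commute_secondDifference_of_commute_shiftMatrix (shiftMatrix_commute c) a h).symm) b k

lemma compactAverage_commute_secondDifference (a b : G) (h k : ℝ) :
    Commute (compactAverage a h) (secondDifference b k) :=
  (Commute.one_left _).add_left ((secondDifference_commute a b h k).smul_left _)

lemma compactAverage_commute (a b : G) (h k : ℝ) :
    Commute (compactAverage a h) (compactAverage b k) :=
  (Commute.one_right _).add_right ((compactAverage_commute_secondDifference a b h k).smul_right _)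

end Fintype

lemma secondDifference_nonpos [Finite G] (a : G) (h : ℝ) : secondDifference a h ≤ 0 := by
  cases nonempty_fintype G
  have hfactor :
      -secondDifference a h = (h ^ 2)⁻¹ • ((shiftMatrix a - 1)ᴴ * (shiftMatrix a - 1)) := by
    rw [secondDifference, conjTranspose_sub, conjTranspose_shiftMatrix, conjTranspose_one, sub_mul,
      mul_sub, mul_sub, shiftMatrix_neg_mul_self, mul_one, one_mul, mul_one]
    module
  rw [← neg_nonneg, hfactor]
  exact smul_nonneg (by positivity) (posSemidef_conjTranspose_mul_self _).nonneg

lemma two_thirds_smul_one_le_compactAverage [Finite G] (a : G) {h : ℝ} (hh : h ≠ 0) :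
    (2 / 3 : ℝ) • (1 : Matrix G G ℝ) ≤ compactAverage a h := by
  cases nonempty_fintype G
  have hfactor : compactAverage a h - (2 / 3 : ℝ) • 1
      = (1 / 12 : ℝ) • ((shiftMatrix a + 1)ᴴ * (shiftMatrix a + 1)) := by
    have hscale : h ^ 2 / 12 * (h ^ 2)⁻¹ = 1 / 12 := by field_simp
    rw [compactAverage, secondDifference, smul_smul, hscale, conjTranspose_add,
      conjTranspose_shiftMatrix, conjTranspose_one, add_mul, mul_add, mul_add,
      shiftMatrix_neg_mul_self, mul_one, one_mul, mul_one]
    module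
  rw [← sub_nonneg, hfactor]
  exact smul_nonneg (by norm_num) (posSemidef_conjTranspose_mul_self _).nonneg

theorem perturbed_crank_nicolson_stability_2d_general [Fintype G] (a b : G) {h k τ γ₁ γ₂ : ℝ}
    (hh : h ≠ 0) (hk : k ≠ 0) (hτ : 0 < τ) (hγ₁ : 0 ≤ γ₁) (hγ₂ : 0 ≤ γ₂) {u v R : G → ℝ}
    (hstep : (compactAverage a h * compactAverage b k) *ᵥ (τ⁻¹ • (u - v))
      + perturbedSplitting (compactAverage a h) (compactAverage b k)
          (secondDifference a h) (secondDifference b k) γ₁ γ₂ τ *ᵥ ((2⁻¹ : ℝ) • (u + v)) = R) :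
    √(u ⬝ᵥ (compactAverage a h * compactAverage b k) *ᵥ u)
      ≤ √(v ⬝ᵥ (compactAverage a h * compactAverage b k) *ᵥ v) + 3 / 2 * τ * √(R ⬝ᵥ R) := by
  have hA := two_thirds_smul_one_le_compactAverage a hh
  have hB := two_thirds_smul_one_le_compactAverage b hk
  have hone : (0 : Matrix G G ℝ) ≤ (2 / 3 : ℝ) • 1 := smul_nonneg (by norm_num) zero_le_one
  have hAB := mul_smul_one_le_mul_of_commute (by norm_num) (by norm_num) hA hB
    (compactAverage_commute a b h k)
  have hL := perturbedSplitting_nonneg hγ₁ hγ₂ hτ.le (hone.trans hA) (hone.trans hB)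
    (secondDifference_nonpos a h) (secondDifference_nonpos b k)
    (compactAverage_commute a b h k) (secondDifference_commute a b h k)
    (compactAverage_commute_secondDifference a a h h)
    (compactAverage_commute_secondDifference a b h k)
    (compactAverage_commute_secondDifference b a k h)
    (compactAverage_commute_secondDifference b b k k)
  have hconst : τ / √(2 / 3 * (2 / 3)) = 3 / 2 * τ := by
    rw [Real.sqrt_mul_self (by norm_num)]
    ring
  rw [← hconst]
  exact crankNicolson_sqrt_energy_le (by norm_num) hτ hAB (dotProduct_mulVec_nonneg_of_nonneg hL)
    hstep

end Translation

section PeriodicGrid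

variable {Nx Ny : ℕ} [NeZero Nx] [NeZero Ny] (v w : ZMod Nx × ZMod Ny → ℝ)

lemma dx2_eq_mulVec (hx : ℝ) : dx2 Nx Ny hx v = secondDifference (1, 0) hx *ᵥ v := by
  funext p
  simp only [dx2, secondDifference_mulVec_apply, Prod.add_def, Prod.sub_def, add_zero, sub_zero]

lemma dy2_eq_mulVec (hy : ℝ) : dy2 Nx Ny hy v = secondDifference (0, 1) hy *ᵥ v := by
  funext p
  simp only [dy2, secondDifference_mulVec_apply, Prod.add_def, Prod.sub_def, add_zero, sub_zero]

lemma Ax_eq_mulVec (hx : ℝ) : Ax Nx Ny hx v = compactAverage (1, 0) hx *ᵥ v := by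
  funext p
  rw [Ax, compactAverage_mulVec_apply, dx2_eq_mulVec]

lemma Ay_eq_mulVec (hy : ℝ) : Ay Nx Ny hy v = compactAverage (0, 1) hy *ᵥ v := by
  funext p
  rw [Ay, compactAverage_mulVec_apply, dy2_eq_mulVec]

lemma ip2_eq_dotProduct (hx hy : ℝ) : ip2 Nx Ny hx hy v w = hx * hy * (w ⬝ᵥ v) := by
  rw [dotProduct_comm, ip2, dotProduct]

end PeriodicGrid

/-- Stability estimate for the 2D perturbed Crank–Nicolson diffusion step
(Lemma 5.4, core inequality): if `ē = (e* + e)/2` satisfies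
`A((e* − e)/τ) − (γˣ/2) A_y δx² ē − (γʸ/2) A_x δy² ē + (γˣγʸτ/8) A δx² δy² ē = R`,
with `A = A_x A_y`, then `‖e*‖_A ≤ ‖e‖_A + (3/2) τ ‖R‖`. -/
theorem perturbed_crank_nicolson_stability_2d
    (Nx Ny : ℕ) [NeZero Nx] [NeZero Ny] (hx hy τ γx γy : ℝ)
    (hhx : 0 < hx) (hhy : 0 < hy) (hτ : 0 < τ) (hγx : 0 < γx) (hγy : 0 < γy)
    (e estar R : ZMod Nx × ZMod Ny → ℝ)
    (heq : ∀ p : ZMod Nx × ZMod Ny,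
      Ax Nx Ny hx (Ay Nx Ny hy (fun q => (estar q - e q) / τ)) p
        - γx / 2 * Ay Nx Ny hy (dx2 Nx Ny hx (fun q => (estar q + e q) / 2)) p
        - γy / 2 * Ax Nx Ny hx (dy2 Nx Ny hy (fun q => (estar q + e q) / 2)) p
        + γx * γy * τ / 8 *
            Ax Nx Ny hx (Ay Nx Ny hy
              (dx2 Nx Ny hx (dy2 Nx Ny hy (fun q => (estar q + e q) / 2)))) p
        = R p) :
    Real.sqrt (ip2 Nx Ny hx hy (Ax Nx Ny hx (Ay Nx Ny hy estar)) estar)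
      ≤ Real.sqrt (ip2 Nx Ny hx hy (Ax Nx Ny hx (Ay Nx Ny hy e)) e)
        + 3 / 2 * τ * nrm2 Nx Ny hx hy R := by
  have hcell : 0 ≤ hx * hy := by positivity
  have hdiff : (fun q ↦ (estar q - e q) / τ) = τ⁻¹ • (estar - e) :=
    funext fun _ ↦ div_eq_inv_mul _ _
  have havg : (fun q ↦ (estar q + e q) / 2) = (2⁻¹ : ℝ) • (estar + e) :=
    funext fun _ ↦ div_eq_inv_mul _ _
  simp only [Ax_eq_mulVec, Ay_eq_mulVec, dx2_eq_mulVec, dy2_eq_mulVec, mulVec_mulVec,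
    hdiff, havg] at heq
  have hbound := perturbed_crank_nicolson_stability_2d_general (1, 0) (0, 1) hhx.ne' hhy.ne' hτ
    hγx.le hγy.le (u := estar) (v := e) (R := R) <| by
      funext p
      rw [← heq p]
      simp only [perturbedSplitting, sub_mulVec, smul_mulVec, Pi.add_apply, Pi.sub_apply,
        Pi.smul_apply, smul_eq_mul, mul_assoc]
      ring
  simp only [nrm2, ip2_eq_dotProduct, Ax_eq_mulVec, Ay_eq_mulVec, mulVec_mulVec,
    Real.sqrt_mul hcell]
  linarith [mul_le_mul_of_nonneg_left hbound (Real.sqrt_nonneg (hx * hy))]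
end

section
/- Pointwise non-expansiveness of the KKT bound-preserving correction: Let m < M, τ > 0, H(s) = (M − s)(s − m). Suppose u*, u, ū, λ ∈ ℝ satisfy m ≤ u* ≤ M, u − ū = τ λ H'(u), λ ≥ 0, H(u) ≥ 0, and λ H(u) = 0. Then (u* − u) · λ H'(u) ≥ 0 and consequently |u* − u| ≤ |u* − ū|. -/
/-!
Since `H` is concave and `H(u*) ≥ 0`, complementarity gives
`(u* − u) · λ H'(u) ≥ λ (H(u*) − H(u)) = λ H(u*) ≥ 0`. Thus the correction `u − ū = τ λ H'(u)`
never points against `u* − u`, and adding it to `u* − u` to form `u* − ū` cannot shrink it.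
-/

section CommRing

variable {R : Type*} [CommRing R]

/-- The quadratic bound-enforcing function `H` of the interval `[m, M]`, whose sign encodes
the bounds: over an ordered field with `m ≤ M`, `0 ≤ H(s)` means `m ≤ s ≤ M`. -/
def boundFun (m M s : R) : R := (M - s) * (s - m)

/-- The derivative `H'` of `boundFun m M`, given by its formula so that it makes sense over any
commutative ring. -/
def boundFunDeriv (m M s : R) : R := M + m - 2 * s

theorem boundFun_eq_taylor (m M a b : R) :
    boundFun m M a = boundFun m M b + boundFunDeriv m M b * (a - b) - (a - b) ^ 2 := by
  unfold boundFun boundFunDeriv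
  ring

end CommRing

section OrderedRing

variable {R : Type*} [CommRing R] [LinearOrder R] [IsOrderedRing R]

theorem boundFun_nonneg {m M s : R} (hlo : m ≤ s) (hhi : s ≤ M) : 0 ≤ boundFun m M s :=
  mul_nonneg (sub_nonneg.2 hhi) (sub_nonneg.2 hlo)

theorem boundFun_le_tangent (m M a b : R) :
    boundFun m M a ≤ boundFun m M b + boundFunDeriv m M b * (a - b) := by
  rw [boundFun_eq_taylor m M a b]
  exact sub_le_self _ (sq_nonneg _)

theorem sub_mul_boundFunDeriv_nonneg_of_complementary {m M a u lam : R}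
    (ha : 0 ≤ boundFun m M a) (hlam : 0 ≤ lam) (hcomp : lam * boundFun m M u = 0) :
    0 ≤ (a - u) * (lam * boundFunDeriv m M u) :=
  calc
    0 ≤ lam * boundFun m M a := mul_nonneg hlam ha
    _ ≤ lam * (boundFun m M u + boundFunDeriv m M u * (a - u)) :=
      mul_le_mul_of_nonneg_left (boundFun_le_tangent m M a u) hlam
    _ = lam * (boundFunDeriv m M u * (a - u)) := by rw [mul_add, hcomp, zero_add]
    _ = (a - u) * (lam * boundFunDeriv m M u) := by ring

end OrderedRing

section StrictOrderedRing

variable {R : Type*} [CommRing R] [LinearOrder R] [IsStrictOrderedRing R]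

theorem abs_le_abs_add_of_mul_nonneg {a b : R} (hab : 0 ≤ a * b) : |a| ≤ |a + b| :=
  sq_le_sq.mp <| calc
    a ^ 2 ≤ a ^ 2 + (2 * (a * b) + b ^ 2) := le_add_of_nonneg_right (by positivity)
    _ = (a + b) ^ 2 := by ring

theorem kkt_correction_pointwise_nonexpansive_general {m M τ ustar u ubar lam : R}
    (hτ : 0 ≤ τ) (hlo : m ≤ ustar) (hhi : ustar ≤ M)
    (heq : u - ubar = τ * (lam * boundFunDeriv m M u))
    (hlam : 0 ≤ lam) (hcomp : lam * boundFun m M u = 0) :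
    0 ≤ (ustar - u) * (lam * boundFunDeriv m M u) ∧ |ustar - u| ≤ |ustar - ubar| := by
  have hvar : 0 ≤ (ustar - u) * (lam * boundFunDeriv m M u) :=
    sub_mul_boundFunDeriv_nonneg_of_complementary (boundFun_nonneg hlo hhi) hlam hcomp
  have hcorr : 0 ≤ (ustar - u) * (u - ubar) := by
    rw [heq, mul_left_comm]
    exact mul_nonneg hτ hvar
  refine ⟨hvar, ?_⟩
  simpa only [sub_add_sub_cancel] using abs_le_abs_add_of_mul_nonneg hcorr

end StrictOrderedRing

/-- Pointwise non-expansiveness of the KKT bound-preserving correction: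
with `H(s) = (M − s)(s − m)` and `H'(s) = M + m − 2s`, if `m ≤ u* ≤ M`,
`u − ū = τ λ H'(u)`, `λ ≥ 0`, `H(u) ≥ 0` and `λ H(u) = 0`, then
`(u* − u) · λ H'(u) ≥ 0` and `|u* − u| ≤ |u* − ū|`. -/
theorem kkt_correction_pointwise_nonexpansive
    (m M τ ustar u ubar lam : ℝ) (hmM : m < M) (hτ : 0 < τ)
    (hlo : m ≤ ustar) (hhi : ustar ≤ M)
    (heq : u - ubar = τ * (lam * (M + m - 2 * u)))
    (hlam : 0 ≤ lam)
    (hH : 0 ≤ (M - u) * (u - m))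
    (hcomp : lam * ((M - u) * (u - m)) = 0) :
    0 ≤ (ustar - u) * (lam * (M + m - 2 * u)) ∧ |ustar - u| ≤ |ustar - ubar| :=
  kkt_correction_pointwise_nonexpansive_general hτ.le hlo hhi heq hlam hcomp
end
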